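/- arXiv:2310.09264 — 10 statements merged into one kernel-verified Lean document; each statement's English description precedes it below -/
import Mathlib

section
/- Let X be a lattice-ordered group and A a sub-ℓ-group of X. Then A is a convex subset of X if and only if for every a₁, a₂ ∈ A and every x, y ∈ X one has (a₁*x ⊔ a₂*y)*(x ⊔ y)⁻¹ ∈ A. -/
/-!
Monotonicity of multiplication places `(a₁ * x ⊔ a₂ * y) * (x ⊔ y)⁻¹` between any common lower bound
and any common upper bound of `a₁` and `a₂`, and a convex sub-ℓ-group contains such bounds.
Conversely, if `a ≤ x ≤ b`, the choice `a₁ = 1`, `a₂ = b * a⁻¹`, `y = a` collapses the term to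
`b * x⁻¹`, while `x = y = 1` collapses it to `a₁ ⊔ a₂`.
-/

section SupTerm

variable {X : Type*} [SemilatticeSup X] [Group X]

section Bounds

variable [MulLeftMono X] [MulRightMono X] {a₁ a₂ c : X}

theorem le_sup_mul_inv_sup (h₁ : c ≤ a₁) (h₂ : c ≤ a₂) (x y : X) :
    c ≤ (a₁ * x ⊔ a₂ * y) * (x ⊔ y)⁻¹ := by
  rw [le_mul_inv_iff_mul_le, ← le_inv_mul_iff_mul_le]
  refine sup_le (le_inv_mul_iff_mul_le.2 ?_) (le_inv_mul_iff_mul_le.2 ?_)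
  · exact le_sup_of_le_left (mul_le_mul_left h₁ x)
  · exact le_sup_of_le_right (mul_le_mul_left h₂ y)

theorem sup_mul_inv_sup_le (h₁ : a₁ ≤ c) (h₂ : a₂ ≤ c) (x y : X) :
    (a₁ * x ⊔ a₂ * y) * (x ⊔ y)⁻¹ ≤ c := by
  rw [mul_inv_le_iff_le_mul]
  exact sup_le (mul_le_mul' h₁ le_sup_left) (mul_le_mul' h₂ le_sup_right)

theorem sup_mul_inv_sup_mem {A : Subgroup X} (hsup : SupClosed (A : Set X))
    (hconv : (A : Set X).OrdConnected) (h₁ : a₁ ∈ A) (h₂ : a₂ ∈ A) (x y : X) :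
    (a₁ * x ⊔ a₂ * y) * (x ⊔ y)⁻¹ ∈ A := by
  have lower_mem : (a₁⁻¹ ⊔ a₂⁻¹)⁻¹ ∈ A := A.inv_mem (hsup (A.inv_mem h₁) (A.inv_mem h₂))
  have upper_mem : a₁ ⊔ a₂ ∈ A := hsup h₁ h₂
  exact hconv.out lower_mem upper_mem
    ⟨le_sup_mul_inv_sup (inv_le'.2 le_sup_left) (inv_le'.2 le_sup_right) x y,
      sup_mul_inv_sup_le le_sup_left le_sup_right x y⟩

end Bounds

theorem supClosed_of_sup_mul_inv_sup_mem {S : Set X}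
    (hS : ∀ a₁ a₂ x y : X, a₁ ∈ S → a₂ ∈ S → (a₁ * x ⊔ a₂ * y) * (x ⊔ y)⁻¹ ∈ S) :
    SupClosed S := by
  intro a ha b hb
  simpa only [mul_one, sup_idem, inv_one] using hS a b 1 1 ha hb

theorem ordConnected_of_sup_mul_inv_sup_mem {A : Subgroup X}
    (hA : ∀ a₁ a₂ x y : X, a₁ ∈ A → a₂ ∈ A → (a₁ * x ⊔ a₂ * y) * (x ⊔ y)⁻¹ ∈ A) :
    (A : Set X).OrdConnected := by
  refine ⟨fun a ha b hb x ⟨hax, hxb⟩ ↦ ?_⟩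
  have term_eq : (1 * x ⊔ b * a⁻¹ * a) * (x ⊔ a)⁻¹ = b * x⁻¹ := by
    rw [one_mul, inv_mul_cancel_right, sup_eq_right.2 hxb, sup_eq_left.2 hax]
  have mul_inv_mem : b * x⁻¹ ∈ A :=
    term_eq ▸ hA 1 (b * a⁻¹) x a A.one_mem (A.mul_mem hb (A.inv_mem ha))
  exact A.inv_mem_iff.1 ((A.mul_mem_cancel_left hb).1 mul_inv_mem)

theorem convex_iff_term_condition_general [MulLeftMono X] [MulRightMono X] (A : Subgroup X) :
    SupClosed (A : Set X) ∧ (A : Set X).OrdConnected ↔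
      ∀ a₁ a₂ x y : X, a₁ ∈ A → a₂ ∈ A → (a₁ * x ⊔ a₂ * y) * (x ⊔ y)⁻¹ ∈ A :=
  ⟨fun ⟨hsup, hconv⟩ _ _ x y h₁ h₂ ↦ sup_mul_inv_sup_mem hsup hconv h₁ h₂ x y,
    fun hA ↦ ⟨supClosed_of_sup_mul_inv_sup_mem hA, ordConnected_of_sup_mul_inv_sup_mem hA⟩⟩

end SupTerm

/-- A sub-ℓ-group `A` of a lattice-ordered group `X` is convex iff
for all `a₁ a₂ ∈ A` and `x y ∈ X`, `(a₁*x ⊔ a₂*y)*(x ⊔ y)⁻¹ ∈ A`. -/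
theorem convex_iff_term_condition {X : Type*} [Lattice X] [Group X]
    [CovariantClass X X (· * ·) (· ≤ ·)]
    [CovariantClass X X (Function.swap (· * ·)) (· ≤ ·)]
    (A : Subgroup X) (hA : ∀ a b : X, a ∈ A → b ∈ A → a ⊔ b ∈ A) :
    (∀ a x b : X, a ∈ A → b ∈ A → a ≤ x → x ≤ b → x ∈ A) ↔
      (∀ a₁ a₂ x y : X, a₁ ∈ A → a₂ ∈ A → (a₁ * x ⊔ a₂ * y) * (x ⊔ y)⁻¹ ∈ A) := by
  have hsup : SupClosed (A : Set X) := fun a ha b hb ↦ hA a b ha hb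
  rw [← convex_iff_term_condition_general A, and_iff_right hsup]
  exact ⟨fun h ↦ ⟨fun a ha b hb x hx ↦ h a x b ha hb hx.1 hx.2⟩,
    fun h a x b ha hb hax hxb ↦ h.out ha hb ⟨hax, hxb⟩⟩
end

section
/- Let X be a lattice-ordered group and A, B two sub-ℓ-groups of X. There exists a map φ : A × B → X that preserves the group multiplication and the join ⊔ (where A × B carries the componentwise group and lattice structure) and satisfies φ(a, 1) = a for all a ∈ A and φ(1, b) = b for all b ∈ B, if and only if A and B are orthogonal, i.e., |a| ⊓ |b| = 1 for all a ∈ A, b ∈ B. Moreover, such a map φ, when it exists, is necessarily given by φ(a, b) = a*b. -/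
/-!
Multiplication is the only candidate for a cooperator, since `φ(a, b) = φ(a, 1) φ(1, b)`. A
cooperator turns `(p, 1) ⊔ (1, q) = (p, q)`, for `p, q ≥ 1`, into `p ⊔ q = p * q`, which by the
identity `a / (a ⊓ b) * b = a ⊔ b` says that `p ⊓ q = 1`; take `p = |a|` and `q = |b|`.

Conversely, orthogonal positive elements commute, as their product in either order is their join,
and hence so do all orthogonal elements. As for joins, `(a ⊔ c) * (b ⊔ d)` is the join of
`s = a * b ⊔ c * d` and the mixed terms `a * d`, `c * b`. Each mixed term lies below both
`s * |a⁻¹ * c|` and `s * |b⁻¹ * d|`, hence below `s * (|a⁻¹ * c| ⊓ |b⁻¹ * d|) = s`.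
-/

section LatticeGroup

variable {X : Type*} [Lattice X] [Group X] {a b : X}

theorem commute_of_commute_oneLePart_leOnePart [MulLeftMono X] (hpos : Commute a⁺ᵐ b)
    (hneg : Commute a⁻ᵐ b) : Commute a b := by
  rw [← oneLePart_div_leOnePart a, div_eq_mul_inv]
  exact hpos.mul_left hneg.inv_left

theorem mabs_mem_of_supClosed {A : Subgroup X} (hA : SupClosed (A : Set X)) (ha : a ∈ A) :
    |a|ₘ ∈ A :=
  hA ha (A.inv_mem ha)

variable [MulLeftMono X] [MulRightMono X]

theorem oneLePart_le_mabs (a : X) : a⁺ᵐ ≤ |a|ₘ :=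
  sup_le (le_mabs_self a) (one_le_mabs a)

theorem div_inf_mul_eq_sup (a b : X) : a / (a ⊓ b) * b = a ⊔ b := by
  rw [div_inf, div_self', sup_mul, one_mul, div_mul_cancel, sup_comm]

theorem inf_eq_one_iff_sup_eq_mul : a ⊓ b = 1 ↔ a ⊔ b = a * b := by
  rw [← div_inf_mul_eq_sup, mul_left_inj, div_eq_self]

theorem commute_of_inf_eq_one (h : a ⊓ b = 1) : Commute a b :=
  calc
    a * b = a ⊔ b := (inf_eq_one_iff_sup_eq_mul.1 h).symm
    _ = b ⊔ a := sup_comm a b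
    _ = b * a := inf_eq_one_iff_sup_eq_mul.1 (inf_comm b a ▸ h)

end LatticeGroup

/-- Orthogonality of two elements of a lattice-ordered group, `|a| ⊓ |b| = 1`. -/
def MabsOrthogonal {X : Type*} [Lattice X] [Group X] (a b : X) : Prop :=
  |a|ₘ ⊓ |b|ₘ = 1

namespace MabsOrthogonal

variable {X : Type*} [Lattice X] [Group X] {a b c d : X}

theorem symm (h : MabsOrthogonal a b) : MabsOrthogonal b a :=
  (inf_comm _ _).trans h

theorem inv_left (h : MabsOrthogonal a b) : MabsOrthogonal a⁻¹ b := by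
  rwa [MabsOrthogonal, mabs_inv]

theorem inv_right (h : MabsOrthogonal a b) : MabsOrthogonal a b⁻¹ :=
  h.symm.inv_left.symm

theorem le_of_le_mul_mabs [MulLeftMono X] {s x : X} (h : MabsOrthogonal a b)
    (hxa : x ≤ s * |a|ₘ) (hxb : x ≤ s * |b|ₘ) : x ≤ s :=
  calc
    x ≤ s * |a|ₘ ⊓ s * |b|ₘ := le_inf hxa hxb
    _ = s * (|a|ₘ ⊓ |b|ₘ) := (mul_inf _ _ _).symm
    _ = s := by rw [h, mul_one]

theorem inf_eq_one [MulLeftMono X] (h : MabsOrthogonal a b) (ha : 1 ≤ a) (hb : 1 ≤ b) :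
    a ⊓ b = 1 := by
  rwa [MabsOrthogonal, mabs_of_one_le ha, mabs_of_one_le hb] at h

variable [MulLeftMono X] [MulRightMono X]

theorem mono_left (h : MabsOrthogonal a b) (hca : |c|ₘ ≤ |a|ₘ) : MabsOrthogonal c b :=
  le_antisymm ((inf_le_inf_right _ hca).trans_eq h) (le_inf (one_le_mabs c) (one_le_mabs b))

theorem oneLePart_left (h : MabsOrthogonal a b) : MabsOrthogonal a⁺ᵐ b :=
  h.mono_left <| (mabs_of_one_le (one_le_oneLePart a)).trans_le (oneLePart_le_mabs a)

theorem leOnePart_left (h : MabsOrthogonal a b) : MabsOrthogonal a⁻ᵐ b :=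
  h.inv_left.oneLePart_left

theorem commute_of_one_le_right (h : MabsOrthogonal a b) (hb : 1 ≤ b) : Commute a b :=
  commute_of_commute_oneLePart_leOnePart
    (commute_of_inf_eq_one (h.oneLePart_left.inf_eq_one (one_le_oneLePart a) hb))
    (commute_of_inf_eq_one (h.leOnePart_left.inf_eq_one (one_le_leOnePart a) hb))

theorem commute (h : MabsOrthogonal a b) : Commute a b :=
  .symm <| commute_of_commute_oneLePart_leOnePart
    (h.symm.oneLePart_left.symm.commute_of_one_le_right (one_le_oneLePart b)).symm
    (h.symm.leOnePart_left.symm.commute_of_one_le_right (one_le_leOnePart b)).symm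

theorem mul_le_mul_sup_mul (h : MabsOrthogonal (a⁻¹ * c) (b⁻¹ * d))
    (hd : Commute (a⁻¹ * c) d) : a * d ≤ a * b ⊔ c * d := by
  refine h.le_of_le_mul_mabs ?_ ?_
  · calc
      a * d = c * ((a⁻¹ * c)⁻¹ * d) := by group
      _ = c * d * (a⁻¹ * c)⁻¹ := by rw [hd.inv_left.eq, mul_assoc]
      _ ≤ (a * b ⊔ c * d) * |a⁻¹ * c|ₘ := mul_le_mul' le_sup_right (inv_le_mabs _)
  · calc
      a * d = a * b * (b⁻¹ * d) := by group
      _ ≤ (a * b ⊔ c * d) * |b⁻¹ * d|ₘ := mul_le_mul' le_sup_left (le_mabs_self _)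

theorem sup_mul_sup (h : MabsOrthogonal (a⁻¹ * c) (b⁻¹ * d)) (hb : Commute (a⁻¹ * c) b)
    (hd : Commute (a⁻¹ * c) d) : (a ⊔ c) * (b ⊔ d) = a * b ⊔ c * d := by
  refine le_antisymm ?_ (sup_le (mul_le_mul' le_sup_left le_sup_left)
    (mul_le_mul' le_sup_right le_sup_right))
  have had : a * d ≤ a * b ⊔ c * d := h.mul_le_mul_sup_mul hd
  have hcb : c * b ≤ a * b ⊔ c * d := by
    have h' : MabsOrthogonal (c⁻¹ * a) (d⁻¹ * b) := by simpa using h.inv_left.inv_right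
    have hb' : Commute (c⁻¹ * a) b := by simpa using hb.inv_left
    exact (h'.mul_le_mul_sup_mul hb').trans_eq (sup_comm _ _)
  rw [sup_mul, mul_sup, mul_sup]
  exact sup_le (sup_le le_sup_left had) (sup_le hcb le_sup_right)

end MabsOrthogonal

/-- `φ` is a cooperator of the subgroups `A` and `B` of a lattice-ordered group: a map
`A × B → X` preserving products and joins and extending both inclusions. It is encoded as a total
function, whose values off `A × B` are irrelevant when `A` and `B` are closed under joins. -/
structure IsCooperator {X : Type*} [Lattice X] [Group X] (A B : Subgroup X) (φ : X → X → X) :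
    Prop where
  map_mul : ∀ a c : X, a ∈ A → c ∈ A → ∀ b d : X, b ∈ B → d ∈ B →
    φ (a * c) (b * d) = φ a b * φ c d
  map_sup : ∀ a c : X, a ∈ A → c ∈ A → ∀ b d : X, b ∈ B → d ∈ B →
    φ (a ⊔ c) (b ⊔ d) = φ a b ⊔ φ c d
  map_one_right : ∀ a : X, a ∈ A → φ a 1 = a
  map_one_left : ∀ b : X, b ∈ B → φ 1 b = b

section Cooperator

variable {X : Type*} [Lattice X] [Group X] {A B : Subgroup X} {φ : X → X → X} {a b : X}

theorem IsCooperator.eq_mul (hφ : IsCooperator A B φ) (ha : a ∈ A) (hb : b ∈ B) :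
    φ a b = a * b :=
  calc
    φ a b = φ (a * 1) (1 * b) := by rw [mul_one, one_mul]
    _ = φ a 1 * φ 1 b := hφ.map_mul a 1 ha A.one_mem 1 b B.one_mem hb
    _ = a * b := by rw [hφ.map_one_right a ha, hφ.map_one_left b hb]

theorem IsCooperator.sup_eq_mul (hφ : IsCooperator A B φ) (ha : a ∈ A) (hb : b ∈ B)
    (ha1 : 1 ≤ a) (hb1 : 1 ≤ b) : a ⊔ b = a * b :=
  calc
    a ⊔ b = φ a 1 ⊔ φ 1 b := by rw [hφ.map_one_right a ha, hφ.map_one_left b hb]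
    _ = φ (a ⊔ 1) (1 ⊔ b) := (hφ.map_sup a 1 ha A.one_mem 1 b B.one_mem hb).symm
    _ = φ a b := by rw [sup_of_le_left ha1, sup_of_le_right hb1]
    _ = a * b := hφ.eq_mul ha hb

variable [MulLeftMono X] [MulRightMono X]

theorem IsCooperator.mabsOrthogonal (hφ : IsCooperator A B φ) (hA : SupClosed (A : Set X))
    (hB : SupClosed (B : Set X)) (ha : a ∈ A) (hb : b ∈ B) : MabsOrthogonal a b :=
  inf_eq_one_iff_sup_eq_mul.2 <| hφ.sup_eq_mul (mabs_mem_of_supClosed hA ha)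
    (mabs_mem_of_supClosed hB hb) (one_le_mabs a) (one_le_mabs b)

theorem isCooperator_mul (h : ∀ a ∈ A, ∀ b ∈ B, MabsOrthogonal a b) :
    IsCooperator A B (· * ·) where
  map_mul a c _ hc b d hb _ := (h c hc b hb).commute.mul_mul_mul_comm a d
  map_sup a c ha hc b d hb hd := by
    have hac : a⁻¹ * c ∈ A := A.mul_mem (A.inv_mem ha) hc
    have hbd : b⁻¹ * d ∈ B := B.mul_mem (B.inv_mem hb) hd
    exact (h _ hac _ hbd).sup_mul_sup (h _ hac b hb).commute (h _ hac d hd).commute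
  map_one_right a _ := mul_one a
  map_one_left b _ := one_mul b

end Cooperator

/-- Two sub-ℓ-groups `A`, `B` of a lattice-ordered group `X` admit a cooperator
(a map `A × B → X` preserving multiplication and join componentwise, restricting to the
inclusions) iff they are orthogonal; moreover any such cooperator is the multiplication. -/
theorem cooperator_iff_orthogonal {X : Type*} [Lattice X] [Group X]
    [CovariantClass X X (· * ·) (· ≤ ·)]
    [CovariantClass X X (Function.swap (· * ·)) (· ≤ ·)]
    (A B : Subgroup X)
    (hA : ∀ a b : X, a ∈ A → b ∈ A → a ⊔ b ∈ A)
    (hB : ∀ a b : X, a ∈ B → b ∈ B → a ⊔ b ∈ B) :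
    ((∃ φ : X → X → X,
        (∀ a c : X, a ∈ A → c ∈ A → ∀ b d : X, b ∈ B → d ∈ B →
          φ (a * c) (b * d) = φ a b * φ c d) ∧
        (∀ a c : X, a ∈ A → c ∈ A → ∀ b d : X, b ∈ B → d ∈ B →
          φ (a ⊔ c) (b ⊔ d) = φ a b ⊔ φ c d) ∧
        (∀ a : X, a ∈ A → φ a 1 = a) ∧
        (∀ b : X, b ∈ B → φ 1 b = b)) ↔
      (∀ a : X, a ∈ A → ∀ b : X, b ∈ B → (a ⊔ a⁻¹) ⊓ (b ⊔ b⁻¹) = 1)) ∧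
    (∀ φ : X → X → X,
        (∀ a c : X, a ∈ A → c ∈ A → ∀ b d : X, b ∈ B → d ∈ B →
          φ (a * c) (b * d) = φ a b * φ c d) →
        (∀ a c : X, a ∈ A → c ∈ A → ∀ b d : X, b ∈ B → d ∈ B →
          φ (a ⊔ c) (b ⊔ d) = φ a b ⊔ φ c d) →
        (∀ a : X, a ∈ A → φ a 1 = a) →
        (∀ b : X, b ∈ B → φ 1 b = b) →
        ∀ a : X, a ∈ A → ∀ b : X, b ∈ B → φ a b = a * b) := by
  refine ⟨⟨?_, fun h ↦ ?_⟩, fun φ hmul hsup hφA hφB a ha b hb ↦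
    IsCooperator.eq_mul ⟨hmul, hsup, hφA, hφB⟩ ha hb⟩
  · rintro ⟨φ, hmul, hsup, hφA, hφB⟩ a ha b hb
    have hφ : IsCooperator A B φ := ⟨hmul, hsup, hφA, hφB⟩
    exact hφ.mabsOrthogonal (fun x hx y hy ↦ hA x y hx hy) (fun x hx y hy ↦ hB x y hx hy) ha hb
  · obtain ⟨hmul, hsup, hφA, hφB⟩ := isCooperator_mul h
    exact ⟨(· * ·), hmul, hsup, hφA, hφB⟩
end

section
/- Let X be a lattice-ordered group such that the multiplication map X × X → X preserves binary joins, i.e., (a ⊔ c)*(b ⊔ d) = (a*b) ⊔ (c*d) for all a, b, c, d ∈ X. Then X is trivial: x = 1 for every x ∈ X. (Consequently, the only internal group object in the category of lattice-ordered groups is the zero object.) -/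
/-!
Joins and multiplication satisfy the interchange law, so this is an Eckmann–Hilton argument.
Evaluating `(x ⊔ 1) * (1 ⊔ x)` shows that `x` is the square of `x ⊔ 1`, which forces `1 ≤ x`; hence
`1` is a unit for `⊔` as well and the two operations agree. Multiplication is then idempotent, and
cancellation leaves only `1`.
-/

theorem mul_right_mono_of_interchange {M : Type*} [SemilatticeSup M] [Mul M]
    (h : ∀ a b c d : M, (a ⊔ c) * (b ⊔ d) = (a * b) ⊔ (c * d)) (a : M) :
    Monotone (a * ·) := by
  intro b c hbc
  beta_reduce
  rw [← sup_eq_right, ← h, sup_idem, sup_eq_right.mpr hbc]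

section Interchange

variable {M : Type*} [SemilatticeSup M] [MulOneClass M]

theorem sup_one_mul_self_of_interchange
    (h : ∀ a b c d : M, (a ⊔ c) * (b ⊔ d) = (a * b) ⊔ (c * d)) (x : M) :
    (x ⊔ 1) * (x ⊔ 1) = x :=
  calc
    (x ⊔ 1) * (x ⊔ 1) = (x ⊔ 1) * (1 ⊔ x) := by rw [sup_comm 1 x]
    _ = x * 1 ⊔ 1 * x := h x 1 1 x
    _ = x := by rw [mul_one, one_mul, sup_idem]

theorem one_le_of_interchange
    (h : ∀ a b c d : M, (a ⊔ c) * (b ⊔ d) = (a * b) ⊔ (c * d)) (x : M) : 1 ≤ x :=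
  calc
    1 ≤ x ⊔ 1 := le_sup_right
    _ = (x ⊔ 1) * 1 := (mul_one _).symm
    _ ≤ (x ⊔ 1) * (x ⊔ 1) := mul_right_mono_of_interchange h _ le_sup_right
    _ = x := sup_one_mul_self_of_interchange h x

theorem mul_eq_sup_of_interchange
    (h : ∀ a b c d : M, (a ⊔ c) * (b ⊔ d) = (a * b) ⊔ (c * d)) (a b : M) : a * b = a ⊔ b := by
  have one_unital_sup : EckmannHilton.IsUnital (· ⊔ ·) (1 : M) :=
    { left_id := fun x => sup_eq_right.mpr (one_le_of_interchange h x)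
      right_id := fun x => sup_eq_left.mpr (one_le_of_interchange h x) }
  have mul_eq_sup : ((· * ·) : M → M → M) = (· ⊔ ·) :=
    EckmannHilton.mul EckmannHilton.MulOneClass.isUnital one_unital_sup fun a c b d => h a b c d
  exact congr_fun₂ mul_eq_sup a b

theorem internal_group_trivial_general [IsLeftCancelMul M]
    (h : ∀ a b c d : M, (a ⊔ c) * (b ⊔ d) = (a * b) ⊔ (c * d)) (x : M) : x = 1 := by
  have mul_self : x * x = x := by rw [mul_eq_sup_of_interchange h, sup_idem]
  exact mul_left_cancel (mul_self.trans (mul_one x).symm)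

end Interchange

/-- If multiplication of a lattice-ordered group preserves binary joins (i.e. it is an
internal group object in ℓ-groups), the group is trivial. -/
theorem internal_group_trivial {X : Type*} [Lattice X] [Group X]
    [CovariantClass X X (· * ·) (· ≤ ·)]
    [CovariantClass X X (Function.swap (· * ·)) (· ≤ ·)]
    (h : ∀ a b c d : X, (a ⊔ c) * (b ⊔ d) = (a * b) ⊔ (c * d)) :
    ∀ x : X, x = 1 :=
  internal_group_trivial_general h
end

section
/- Let A and B be lattice-ordered groups, p : A → B a group homomorphism preserving ⊔, and s : B → A a group homomorphism preserving ⊔ with p ∘ s = id. Then the set T = {s(b) | b ∈ B and |s(b)| ⊓ |x| = 1 for all x ∈ ker p} (i.e., the intersection of the image of s with the polar of ker p in A) is an ℓ-ideal of A: it is a subgroup closed under ⊔, it is convex in A, and it is closed under conjugation by arbitrary elements of A. -/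
/-!
Write `N = ker p` and `H = range s`, so that `H` is a sublattice subgroup with `H * N = A`. An
element `y ∈ H ∩ N⊥` commutes with `N`, because `N` and `N⊥` are normal and meet trivially; hence
conjugating `y` by `A` is the same as conjugating it by `H`. For convexity, let `1 ≤ x ≤ t` with
`t ∈ H ∩ N⊥`, and choose `n ∈ N` with `x * n ∈ H`. Since `x` and `x⁻¹ * t` are disjoint from `n`,
one recovers `x = (x * n ⊔ 1) ⊓ t`, which lies in `H`.
-/

section Group

variable {G : Type*} [Group G]

theorem normal_inf_of_sup_eq_top {H N P : Subgroup G} [N.Normal] [hP : P.Normal]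
    (hNP : Disjoint N P) (hHN : H ⊔ N = ⊤) : (H ⊓ P).Normal where
  conj_mem y hy a := by
    obtain ⟨h, hh, n, hn, rfl⟩ := Subgroup.mem_sup_of_normal_right.1 (hHN ▸ Subgroup.mem_top a)
    have hny : n * y * n⁻¹ = y :=
      mul_inv_eq_of_eq_mul (Subgroup.commute_of_normal_of_disjoint N P ‹_› hP hNP n y hn hy.2)
    have hconj : h * n * y * (h * n)⁻¹ = h * y * h⁻¹ := calc
      h * n * y * (h * n)⁻¹ = h * (n * y * n⁻¹) * h⁻¹ := by group
      _ = h * y * h⁻¹ := by rw [hny]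
    rw [hconj]
    exact ⟨H.mul_mem (H.mul_mem hh hy.1) (H.inv_mem hh), hP.conj_mem y hy.2 h⟩

theorem ordConnected_of_forall_one_le_of_le [Preorder G] [MulLeftMono G] {H : Subgroup G}
    (h : ∀ ⦃x t : G⦄, 1 ≤ x → x ≤ t → t ∈ H → x ∈ H) : (H : Set G).OrdConnected where
  out' a ha b hb x hx := by
    have hmem : a⁻¹ * x ∈ H :=
      h (le_inv_mul_iff_le.2 hx.1) (mul_le_mul_right hx.2 a⁻¹)
        (H.mul_mem (H.inv_mem ha) hb)
    exact (H.mul_mem_cancel_left (H.inv_mem ha)).1 hmem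

end Group

section LatticeOrderedGroup

variable {G : Type*} [Lattice G] [Group G] [MulLeftMono G] [MulRightMono G]

theorem mul_inf_eq_one {u v w : G} (huw : u ⊓ w = 1) (hvw : v ⊓ w = 1) : u * v ⊓ w = 1 := by
  have hu : 1 ≤ u := huw ▸ inf_le_left
  have hv : 1 ≤ v := hvw ▸ inf_le_left
  have hw : 1 ≤ w := huw ▸ inf_le_right
  refine le_antisymm ?_ (le_inf (one_le_mul hu hv) hw)
  have h : u * v ⊓ w ≤ u := calc
    u * v ⊓ w ≤ u * v ⊓ u * w := inf_le_inf_left _ (le_mul_of_one_le_left' hu)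
    _ = u := by rw [← mul_inf, hvw, mul_one]
  exact (le_inf h inf_le_right).trans huw.le

theorem mabs_mul_le_mabs_mul_mabs_mul_mabs (a b : G) : |a * b|ₘ ≤ |a|ₘ * |b|ₘ * |a|ₘ := by
  refine mabs_le'.2 ⟨?_, ?_⟩
  · exact (mul_le_mul' (le_mabs_self a) (le_mabs_self b)).trans
      (le_mul_of_one_le_right' (one_le_mabs a))
  · rw [mul_inv_rev, mul_assoc]
    exact (mul_le_mul' (inv_le_mabs b) (inv_le_mabs a)).trans
      (le_mul_of_one_le_left' (one_le_mabs a))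

theorem mabs_conj (a x : G) : |a * x * a⁻¹|ₘ = a * |x|ₘ * a⁻¹ := by
  simp only [mabs, mul_sup, sup_mul, mul_inv_rev, inv_inv, mul_assoc]

theorem mabs_inf_eq_one_of_le {a u w : G} (hau : |a|ₘ ≤ u) (huw : u ⊓ w = 1) :
    |a|ₘ ⊓ w = 1 :=
  le_antisymm ((inf_le_inf_right _ hau).trans huw.le)
    (le_inf (one_le_mabs a) (huw ▸ inf_le_right))

theorem mul_sup_one_inf_eq_self {n t x : G} (hxn : x ⊓ |n|ₘ = 1)
    (htn : x⁻¹ * t ⊓ |n|ₘ = 1) : (x * n ⊔ 1) ⊓ t = x := by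
  have hx : 1 ≤ x := hxn ▸ inf_le_left
  have hxt : x ≤ t := le_inv_mul_iff_le.1 (htn ▸ inf_le_left)
  apply le_antisymm
  · calc
      (x * n ⊔ 1) ⊓ t ≤ x * |n|ₘ ⊓ t :=
        inf_le_inf_right _ <| sup_le (mul_le_mul_right (le_mabs_self n) x) <|
          one_le_mul hx (one_le_mabs n)
      _ = x * (x⁻¹ * t ⊓ |n|ₘ) := by rw [mul_inf, mul_inv_cancel_left, inf_comm]
      _ = x := by rw [htn, mul_one]
  · have hinf : x ⊓ n⁻¹ ≤ 1 := (inf_le_inf_left x (inv_le_mabs n)).trans hxn.le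
    have hle : x ≤ x * n ⊔ 1 := calc
      x ≤ x * (x ⊓ n⁻¹)⁻¹ := le_mul_of_one_le_right' (one_le_inv'.2 hinf)
      _ = x * n ⊔ 1 := by rw [inv_inf, inv_inv, mul_sup, mul_inv_cancel, sup_comm]
    exact le_inf hle hxt

section Subgroup

variable {H : Subgroup G}

theorem infClosed_of_supClosed (hH : SupClosed (H : Set G)) : InfClosed (H : Set G) := by
  intro a ha b hb
  have hab : (a⁻¹ ⊔ b⁻¹)⁻¹ ∈ H := H.inv_mem (hH (H.inv_mem ha) (H.inv_mem hb))
  rwa [inv_sup, inv_inv, inv_inv] at hab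

theorem supClosed_of_ordConnected (hconv : (H : Set G).OrdConnected)
    (hmabs : ∀ a ∈ H, |a|ₘ ∈ H) : SupClosed (H : Set G) := by
  intro a ha b hb
  have hle : a ⊔ b ≤ |a|ₘ * |b|ₘ :=
    sup_le ((le_mabs_self a).trans (le_mul_of_one_le_right' (one_le_mabs b)))
      ((le_mabs_self b).trans (le_mul_of_one_le_left' (one_le_mabs a)))
  exact hconv.out ha (H.mul_mem (hmabs a ha) (hmabs b hb)) ⟨le_sup_left, hle⟩

end Subgroup

/-- The polar `S⊥` of a subset `S` of a lattice-ordered group, bundled as a subgroup. -/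
def polar (S : Set G) : Subgroup G where
  carrier := {y | ∀ x ∈ S, |y|ₘ ⊓ |x|ₘ = 1}
  one_mem' x _ := by simp
  mul_mem' {a b} ha hb x hx :=
    mabs_inf_eq_one_of_le (mabs_mul_le_mabs_mul_mabs_mul_mabs a b) <|
      mul_inf_eq_one (mul_inf_eq_one (ha x hx) (hb x hx)) (ha x hx)
  inv_mem' {a} ha x hx := by simpa using ha x hx

section Polar

variable {S : Set G} {a y : G}

theorem mem_polar_of_mabs_le_mabs (ha : a ∈ polar S) (h : |y|ₘ ≤ |a|ₘ) : y ∈ polar S :=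
  fun x hx => mabs_inf_eq_one_of_le h (ha x hx)

theorem ordConnected_polar (S : Set G) : (polar S : Set G).OrdConnected :=
  ordConnected_of_forall_one_le_of_le fun _ _ hx hxt ht =>
    mem_polar_of_mabs_le_mabs ht (mabs_le_mabs_of_one_le hx hxt)

theorem supClosed_polar (S : Set G) : SupClosed (polar S : Set G) :=
  supClosed_of_ordConnected (ordConnected_polar S) fun a ha =>
    mem_polar_of_mabs_le_mabs ha (mabs_mabs a).le

theorem inf_mabs_eq_one_of_mem_polar (hy : y ∈ polar S) (hy1 : 1 ≤ y) (ha : a ∈ S) :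
    y ⊓ |a|ₘ = 1 := by
  simpa only [mabs_of_one_le hy1] using hy a ha

theorem disjoint_polar (K : Subgroup G) : Disjoint K (polar (K : Set G)) := by
  refine Subgroup.disjoint_def.2 fun {y} hy hy' => ?_
  have h : |y|ₘ ≤ 1 := by simpa only [inf_idem] using (hy' y hy).le
  exact le_antisymm (mabs_le'.1 h).1 (inv_le_one'.1 (mabs_le'.1 h).2)

instance polar_normal (N : Subgroup G) [hN : N.Normal] : (polar (N : Set G)).Normal where
  conj_mem y hy a x hx := by
    have hconj : a⁻¹ * x * a ∈ N := by simpa only [inv_inv] using hN.conj_mem x hx a⁻¹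
    calc
      |a * y * a⁻¹|ₘ ⊓ |x|ₘ = |a * y * a⁻¹|ₘ ⊓ |a * (a⁻¹ * x * a) * a⁻¹|ₘ := by
        congr 2; group
      _ = a * (|y|ₘ ⊓ |a⁻¹ * x * a|ₘ) * a⁻¹ := by
        rw [mabs_conj, mabs_conj, mul_inf, inf_mul]
      _ = 1 := by rw [hy _ hconj, mul_one, mul_inv_cancel]

end Polar

/-- An ℓ-ideal of a lattice-ordered group: a normal subgroup that is closed under `⊔` and convex,
convexity being expressed by `Set.OrdConnected`. -/
structure IsLIdeal (I : Subgroup G) : Prop where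
  normal : I.Normal
  supClosed : SupClosed (I : Set G)
  ordConnected : (I : Set G).OrdConnected

section Complement

variable {H N : Subgroup G} [N.Normal]

theorem ordConnected_inf_polar (hH : SupClosed (H : Set G)) (hHN : H ⊔ N = ⊤) :
    ((H ⊓ polar N : Subgroup G) : Set G).OrdConnected := by
  refine ordConnected_of_forall_one_le_of_le fun x t hx hxt ⟨htH, htP⟩ => ?_
  have hxP : x ∈ polar (N : Set G) :=
    (ordConnected_polar _).out (one_mem _) htP ⟨hx, hxt⟩
  obtain ⟨h, hh, n, hn, rfl⟩ := Subgroup.mem_sup_of_normal_right.1 (hHN ▸ Subgroup.mem_top x)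
  have hrecover : (h * n * n⁻¹ ⊔ 1) ⊓ t = h * n :=
    mul_sup_one_inf_eq_self
      (inf_mabs_eq_one_of_mem_polar hxP hx (N.inv_mem hn))
      (inf_mabs_eq_one_of_mem_polar (mul_mem (inv_mem hxP) htP)
        (le_inv_mul_iff_le.2 hxt) (N.inv_mem hn))
  rw [mul_inv_cancel_right] at hrecover
  have hmem : (h ⊔ 1) ⊓ t ∈ H := infClosed_of_supClosed hH (hH hh H.one_mem) htH
  exact ⟨hrecover ▸ hmem, hxP⟩

theorem isLIdeal_inf_polar (hH : SupClosed (H : Set G)) (hHN : H ⊔ N = ⊤) :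
    IsLIdeal (H ⊓ polar N) where
  normal := normal_inf_of_sup_eq_top (disjoint_polar N) hHN
  supClosed _ ha _ hb := ⟨hH ha.1 hb.1, supClosed_polar (N : Set G) ha.2 hb.2⟩
  ordConnected := ordConnected_inf_polar hH hHN

end Complement

end LatticeOrderedGroup

theorem range_sup_ker_eq_top {A B : Type*} [Group A] [Group B] {p : A →* B} {s : B →* A}
    (hps : ∀ b : B, p (s b) = b) : s.range ⊔ p.ker = ⊤ := by
  refine eq_top_iff.2 fun a _ => Subgroup.mem_sup_of_normal_right.2
    ⟨s (p a), ⟨p a, rfl⟩, (s (p a))⁻¹ * a, ?_, mul_inv_cancel_left _ _⟩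
  rw [MonoidHom.mem_ker, map_mul, map_inv, hps, inv_mul_cancel]

theorem image_section_inter_polar_is_ideal_general {A B : Type*}
    [Lattice A] [Group A] [MulLeftMono A] [MulRightMono A] [Group B]
    (p : A →* B) (s : B →* A) (hs : SupClosed (s.range : Set A)) (hps : ∀ b : B, p (s b) = b) :
    let T : Set A := {a : A | ∃ b : B, a = s b ∧ ∀ x : A, p x = 1 → |s b|ₘ ⊓ |x|ₘ = 1}
    (1 ∈ T) ∧
    (∀ y z : A, y ∈ T → z ∈ T → y * z ∈ T) ∧
    (∀ y : A, y ∈ T → y⁻¹ ∈ T) ∧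
    (∀ y z : A, y ∈ T → z ∈ T → y ⊔ z ∈ T) ∧
    (∀ t x t' : A, t ∈ T → t' ∈ T → t ≤ x → x ≤ t' → x ∈ T) ∧
    (∀ a y : A, y ∈ T → a⁻¹ * y * a ∈ T) := by
  intro T
  set I : Subgroup A := s.range ⊓ polar p.ker
  have hI : IsLIdeal I := isLIdeal_inf_polar hs (range_sup_ker_eq_top hps)
  have mem_T (a : A) : a ∈ T ↔ a ∈ I := by
    constructor
    · rintro ⟨b, rfl, hb⟩
      exact ⟨⟨b, rfl⟩, hb⟩
    · rintro ⟨⟨b, rfl⟩, hb⟩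
      exact ⟨b, rfl, hb⟩
  simp only [mem_T]
  exact ⟨I.one_mem, fun _ _ => I.mul_mem, fun _ => I.inv_mem, fun _ _ hy hz => hI.supClosed hy hz,
    fun _ _ _ ht ht' htx hxt' => hI.ordConnected.out ht ht' ⟨htx, hxt'⟩,
    fun a y hy => by simpa only [inv_inv] using hI.normal.conj_mem y hy a⁻¹⟩

/-- Given a split extension of lattice-ordered groups, the intersection of the image of the
section `s` with the polar of `ker p` is an ℓ-ideal of `A`. -/
theorem image_section_inter_polar_is_ideal {A B : Type*}
    [Lattice A] [Group A]
    [CovariantClass A A (· * ·) (· ≤ ·)]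
    [CovariantClass A A (Function.swap (· * ·)) (· ≤ ·)]
    [Lattice B] [Group B]
    [CovariantClass B B (· * ·) (· ≤ ·)]
    [CovariantClass B B (Function.swap (· * ·)) (· ≤ ·)]
    (p : A →* B) (s : B →* A)
    (hp : ∀ a₁ a₂ : A, p (a₁ ⊔ a₂) = p a₁ ⊔ p a₂)
    (hs : ∀ b₁ b₂ : B, s (b₁ ⊔ b₂) = s b₁ ⊔ s b₂)
    (hps : ∀ b : B, p (s b) = b) :
    let T : Set A :=
      {a : A | ∃ b : B, a = s b ∧ ∀ x : A, p x = 1 → (s b ⊔ (s b)⁻¹) ⊓ (x ⊔ x⁻¹) = 1}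
    -- subgroup
    (1 ∈ T) ∧
    (∀ y z : A, y ∈ T → z ∈ T → y * z ∈ T) ∧
    (∀ y : A, y ∈ T → y⁻¹ ∈ T) ∧
    -- closed under joins
    (∀ y z : A, y ∈ T → z ∈ T → y ⊔ z ∈ T) ∧
    -- convex in `A`
    (∀ t x t' : A, t ∈ T → t' ∈ T → t ≤ x → x ≤ t' → x ∈ T) ∧
    -- closed under conjugation by arbitrary elements of `A`
    (∀ a y : A, y ∈ T → a⁻¹ * y * a ∈ T) :=
  image_section_inter_polar_is_ideal_general p s
    (fun _ ⟨b₁, h₁⟩ _ ⟨b₂, h₂⟩ => ⟨b₁ ⊔ b₂, by rw [hs, h₁, h₂]⟩) hps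
end

section
/- Let A be a lattice-ordered group, B a sub-ℓ-group of A, and X, Y subsets of A such that: (i) |x| ⊓ |y| = 1 for all x ∈ X, y ∈ Y; and (ii) Y is closed under conjugation by elements of B, i.e., b⁻¹*y*b ∈ Y and b*y*b⁻¹ ∈ Y for all b ∈ B, y ∈ Y. Then for all x ∈ X, y ∈ Y and b ∈ B the identity (x*b ⊔ 1)*(b ⊔ 1)⁻¹*(y*b ⊔ 1) = (x*y*b) ⊔ 1 holds. -/
/-!
The map `φ z = (z * b ⊔ 1) / (b ⊔ 1)` is a lattice endomorphism fixing `1`, and `|φ z| ≤ |z|`, so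
`φ` preserves orthogonality. If `x` and `y` are orthogonal, then `x * y ⊔ 1 = x ⊔ y ⊔ 1` and
`x * y ⊓ 1 = x ⊓ y ⊓ 1`. As an element is determined by its join and meet with `1`, the product of
an orthogonal pair is determined by the lattice operations and `1`. Hence `φ x * φ y = φ (x * y)`,
and multiplying on the right by `b ⊔ 1` gives the identity.
-/

/-- Orthogonality `x ⊥ y` of two elements of a lattice-ordered group: their absolute values
`|x|ₘ = x ⊔ x⁻¹` and `|y|ₘ` meet in the identity. -/
def IsOrthogonal {A : Type*} [Lattice A] [Group A] (x y : A) : Prop :=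
  |x|ₘ ⊓ |y|ₘ = 1

namespace IsOrthogonal

variable {A : Type*} [Lattice A] [Group A] {x y : A}

theorem symm (h : IsOrthogonal x y) : IsOrthogonal y x :=
  (inf_comm _ _).trans h

theorem inv_right (h : IsOrthogonal x y) : IsOrthogonal x y⁻¹ := by
  rwa [IsOrthogonal, mabs_inv]

theorem inf_eq_one {p q : A} (h : IsOrthogonal x y) (hp : 1 ≤ p) (hpx : p ≤ |x|ₘ)
    (hq : 1 ≤ q) (hqy : q ≤ |y|ₘ) : p ⊓ q = 1 :=
  le_antisymm ((inf_le_inf hpx hqy).trans_eq h) (le_inf hp hq)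

end IsOrthogonal

section LatticeOrderedGroup

variable {A : Type*} [Lattice A] [Group A] [MulLeftMono A] [MulRightMono A]

theorem group_inf_sup_right (a b c : A) : a ⊓ b ⊔ c = (a ⊔ c) ⊓ (b ⊔ c) := by
  set m := a ⊓ b
  have sup_le_mul_sup {e : A} (he : m ≤ e) : e ⊔ c ≤ e * m⁻¹ * (m ⊔ c) := by
    have one_le_mul_inv : 1 ≤ e * m⁻¹ := by rwa [le_mul_inv_iff_mul_le, one_mul]
    rw [mul_sup, inv_mul_cancel_right]
    exact sup_le_sup_left (le_mul_of_one_le_left' one_le_mul_inv) e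
  apply le_antisymm
  · exact le_inf (sup_le_sup_right inf_le_left c) (sup_le_sup_right inf_le_right c)
  · calc (a ⊔ c) ⊓ (b ⊔ c)
        ≤ a * m⁻¹ * (m ⊔ c) ⊓ b * m⁻¹ * (m ⊔ c) :=
          inf_le_inf (sup_le_mul_sup inf_le_left) (sup_le_mul_sup inf_le_right)
      _ = m ⊔ c := by rw [← inf_mul, ← inf_mul, mul_inv_cancel, one_mul]

theorem mul_inv_inf_mul_eq_sup (a b : A) : a * (a ⊓ b)⁻¹ * b = a ⊔ b := by
  rw [inv_inf, mul_sup, sup_mul, mul_inv_cancel, one_mul, inv_mul_cancel_right, sup_comm]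

theorem mul_eq_sup_of_inf_eq_one {a b : A} (h : a ⊓ b = 1) : a * b = a ⊔ b := by
  simpa [h] using mul_inv_inf_mul_eq_sup a b

theorem eq_of_sup_one_eq_of_inf_one_eq {a b : A} (hsup : a ⊔ 1 = b ⊔ 1)
    (hinf : a ⊓ 1 = b ⊓ 1) : a = b := by
  refine oneLePart_leOnePart_inj.mp ⟨hsup, ?_⟩
  rw [leOnePart_eq_inv_inf_one, hinf, ← leOnePart_eq_inv_inf_one]

theorem mabs_le_mabs_of_le_sup_one_of_inf_one_le {w z : A} (hsup : w ≤ z ⊔ 1)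
    (hinf : z ⊓ 1 ≤ w) : |w|ₘ ≤ |z|ₘ := by
  refine mabs_le'.mpr ⟨hsup.trans (sup_le (le_mabs_self z) (one_le_mabs z)), ?_⟩
  calc w⁻¹ ≤ (z ⊓ 1)⁻¹ := inv_le_inv_iff.mpr hinf
    _ = z⁻¹ ⊔ 1 := by rw [inv_inf, inv_one]
    _ ≤ |z|ₘ := sup_le (inv_le_mabs z) (one_le_mabs z)

namespace IsOrthogonal

variable {x y : A}

theorem mono {x' y' : A} (h : IsOrthogonal x y) (hx : |x'|ₘ ≤ |x|ₘ) (hy : |y'|ₘ ≤ |y|ₘ) :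
    IsOrthogonal x' y' :=
  h.inf_eq_one (one_le_mabs x') hx (one_le_mabs y') hy

theorem one_le_sup (h : IsOrthogonal x y) : 1 ≤ x ⊔ y := by
  rw [← inv_le_one', inv_sup]
  exact (inf_le_inf (inv_le_mabs x) (inv_le_mabs y)).trans_eq h

theorem mul_sup_one (h : IsOrthogonal x y) : x * y ⊔ 1 = x ⊔ y ⊔ 1 := by
  have mul_le : x * y ≤ x ⊔ y ⊔ 1 := by
    have pos_inf_pos : (x ⊔ 1) ⊓ (y ⊔ 1) = 1 :=
      h.inf_eq_one le_sup_right (sup_le (le_mabs_self x) (one_le_mabs x))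
        le_sup_right (sup_le (le_mabs_self y) (one_le_mabs y))
    calc x * y ≤ (x ⊔ 1) * (y ⊔ 1) := mul_le_mul' le_sup_left le_sup_left
      _ = (x ⊔ 1) ⊔ (y ⊔ 1) := mul_eq_sup_of_inf_eq_one pos_inf_pos
      _ = x ⊔ y ⊔ 1 := (sup_sup_distrib_right x y 1).symm
  have left_le : x ≤ x * y ⊔ 1 :=
    calc x ≤ x * (y ⊔ x⁻¹) := le_mul_of_one_le_right' h.symm.inv_right.one_le_sup
      _ = x * y ⊔ 1 := by rw [mul_sup, mul_inv_cancel]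
  have right_le : y ≤ x * y ⊔ 1 :=
    calc y ≤ (x ⊔ y⁻¹) * y := le_mul_of_one_le_left' h.inv_right.one_le_sup
      _ = x * y ⊔ 1 := by rw [sup_mul, inv_mul_cancel]
  exact le_antisymm (sup_le mul_le le_sup_right) (sup_le (sup_le left_le right_le) le_sup_right)

theorem mul_inf_one (h : IsOrthogonal x y) : x * y ⊓ 1 = x ⊓ y ⊓ 1 := by
  have inv_mul_inv_sup_one : y⁻¹ * x⁻¹ ⊔ 1 = y⁻¹ ⊔ x⁻¹ ⊔ 1 :=
    h.inv_right.symm.inv_right.mul_sup_one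
  apply inv_injective
  rw [inv_inf, inv_inf, inv_inf, mul_inv_rev, inv_one, inv_mul_inv_sup_one, sup_comm y⁻¹]

theorem map_mul {F A' : Type*} [Lattice A'] [Group A'] [MulLeftMono A'] [MulRightMono A']
    [FunLike F A A'] [LatticeHomClass F A A'] (f : F) (hf_one : f 1 = 1)
    (h : IsOrthogonal x y) (hf : IsOrthogonal (f x) (f y)) : f (x * y) = f x * f y := by
  apply eq_of_sup_one_eq_of_inf_one_eq
  · calc f (x * y) ⊔ 1 = f (x * y ⊔ 1) := by rw [map_sup, hf_one]
      _ = f x ⊔ f y ⊔ 1 := by rw [h.mul_sup_one, map_sup, map_sup, hf_one]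
      _ = f x * f y ⊔ 1 := hf.mul_sup_one.symm
  · calc f (x * y) ⊓ 1 = f (x * y ⊓ 1) := by rw [map_inf, hf_one]
      _ = f x ⊓ f y ⊓ 1 := by rw [h.mul_inf_one, map_inf, map_inf, hf_one]
      _ = f x * f y ⊓ 1 := hf.mul_inf_one.symm

end IsOrthogonal

/-- Right multiplication by `b` followed by `· ⊔ 1`, divided by its value at `1` so as to fix `1`:
a lattice endomorphism that is multiplicative on orthogonal pairs. -/
def mulSupOneHom (b : A) : LatticeHom A A where
  toFun z := (z * b ⊔ 1) / (b ⊔ 1)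
  map_sup' z w := by rw [sup_mul, sup_sup_distrib_right, sup_div]
  map_inf' z w := by rw [inf_mul, group_inf_sup_right, inf_div]

theorem mulSupOneHom_apply (b z : A) : mulSupOneHom b z = (z * b ⊔ 1) / (b ⊔ 1) :=
  rfl

theorem mulSupOneHom_one (b : A) : mulSupOneHom b 1 = 1 := by
  rw [mulSupOneHom_apply, one_mul, div_self']

theorem mabs_mulSupOneHom_le (b z : A) : |mulSupOneHom b z|ₘ ≤ |z|ₘ := by
  rw [mulSupOneHom_apply]
  apply mabs_le_mabs_of_le_sup_one_of_inf_one_le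
  · rw [div_le_iff_le_mul]
    exact sup_le (mul_le_mul' le_sup_left le_sup_left) (one_le_mul le_sup_right le_sup_right)
  · rw [le_div_iff_mul_le, mul_sup, mul_one]
    exact sup_le_sup (mul_le_mul_left inf_le_left b) inf_le_right

theorem cooperator_identity_in_points_general {x y : A} (h : IsOrthogonal x y) (b : A) :
    (x * b ⊔ 1) * (b ⊔ 1)⁻¹ * (y * b ⊔ 1) = x * y * b ⊔ 1 := by
  have map_orthogonal : IsOrthogonal (mulSupOneHom b x) (mulSupOneHom b y) :=
    h.mono (mabs_mulSupOneHom_le b x) (mabs_mulSupOneHom_le b y)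
  have hom_mul : mulSupOneHom b (x * y) = mulSupOneHom b x * mulSupOneHom b y :=
    h.map_mul (mulSupOneHom b) (mulSupOneHom_one b) map_orthogonal
  simp only [mulSupOneHom_apply, div_eq_mul_inv] at hom_mul
  rw [← mul_assoc, mul_left_inj] at hom_mul
  exact hom_mul.symm

end LatticeOrderedGroup

/-- If `X ⊥ Y` and `Y` is closed under conjugation by elements of the sub-ℓ-group `B`,
then `(x*b ⊔ 1)*(b ⊔ 1)⁻¹*(y*b ⊔ 1) = x*y*b ⊔ 1` for all `x ∈ X`, `y ∈ Y`, `b ∈ B`. -/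
theorem cooperator_identity_in_points {A : Type*} [Lattice A] [Group A]
    [CovariantClass A A (· * ·) (· ≤ ·)]
    [CovariantClass A A (Function.swap (· * ·)) (· ≤ ·)]
    (B : Subgroup A)
    (hB : ∀ a b : A, a ∈ B → b ∈ B → a ⊔ b ∈ B)
    (X Y : Set A)
    (horth : ∀ x ∈ X, ∀ y ∈ Y, (x ⊔ x⁻¹) ⊓ (y ⊔ y⁻¹) = 1)
    (hconj : ∀ b : A, b ∈ B → ∀ y ∈ Y, b⁻¹ * y * b ∈ Y ∧ b * y * b⁻¹ ∈ Y) :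
    ∀ x ∈ X, ∀ y ∈ Y, ∀ b : A, b ∈ B →
      (x * b ⊔ 1) * (b ⊔ 1)⁻¹ * (y * b ⊔ 1) = (x * y * b) ⊔ 1 :=
  fun x hx y hy b _ => cooperator_identity_in_points_general (horth x hx y hy) b
end

section
/- Let X be a lattice-ordered group and H, K two ℓ-ideals of X. Then: (i) |h| ⊓ |k| ∈ H ∩ K for all h ∈ H and k ∈ K (so the images of H and K in X/(H ∩ K) are orthogonal); and (ii) if I is any ℓ-ideal of X such that |h| ⊓ |k| ∈ I for all h ∈ H and k ∈ K, then H ∩ K ⊆ I. In other words, H ∩ K is the smallest ℓ-ideal I of X such that the images of H and K in the quotient X/I are orthogonal; equivalently, the Huq commutator of the ideals H and K equals H ∩ K. -/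
section Convex

lemma ordConnected_of_forall_le_le {X : Type*} [Preorder X] {s : Set X}
    (hs : ∀ a x b : X, a ∈ s → b ∈ s → a ≤ x → x ≤ b → x ∈ s) : s.OrdConnected :=
  ⟨fun a ha b hb x hx => hs a x b ha hb hx.1 hx.2⟩

variable {X S : Type*} [SetLike S X] {s : S}

lemma mem_of_one_le_of_le [Preorder X] [One X] [OneMemClass S X] {a x : X}
    (hs : (s : Set X).OrdConnected) (hx : 1 ≤ x) (hxa : x ≤ a) (ha : a ∈ s) : x ∈ s :=
  hs.out (one_mem s) ha ⟨hx, hxa⟩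

variable [Lattice X] [Group X] [InvMemClass S X]

lemma mabs_mem_of_supClosed_s13 {x : X} (hs : SupClosed (s : Set X)) (hx : x ∈ s) : |x|ₘ ∈ s :=
  hs hx (inv_mem hx)

lemma mem_of_mabs_mem [MulLeftMono X] [MulRightMono X] {x : X}
    (hs : (s : Set X).OrdConnected) (hx : |x|ₘ ∈ s) : x ∈ s :=
  hs.out (inv_mem hx) hx ⟨inv_le_of_inv_le' (inv_le_mabs x), le_mabs_self x⟩

end Convex

section Orthogonal

variable {X : Type*} [Lattice X] [Group X]

/-- `H` and `K` are orthogonal modulo `I`. When `I` is an ℓ-ideal, this says that the images of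
`H` and `K` in `X ⧸ I` are orthogonal: the quotient map preserves `|·|ₘ` and `⊓`, so
`|h|ₘ ⊓ |k|ₘ` becomes trivial in `X ⧸ I` exactly when it lies in `I`. Formulating it in `X`
makes sense for arbitrary subsets. -/
def OrthogonalModulo (H K I : Set X) : Prop :=
  ∀ h ∈ H, ∀ k ∈ K, |h|ₘ ⊓ |k|ₘ ∈ I

lemma OrthogonalModulo.mabs_mem {H K I : Set X} {x : X} (h : OrthogonalModulo H K I)
    (hxH : x ∈ H) (hxK : x ∈ K) : |x|ₘ ∈ I := by
  simpa only [inf_idem] using h x hxH x hxK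

variable [MulLeftMono X] [MulRightMono X] {H K : Subgroup X}

lemma orthogonalModulo_inf (hHsup : SupClosed (H : Set X)) (hKsup : SupClosed (K : Set X))
    (hHconvex : (H : Set X).OrdConnected) (hKconvex : (K : Set X).OrdConnected) :
    OrthogonalModulo (H : Set X) K (H ⊓ K : Subgroup X) := by
  intro h hh k hk
  have one_le : 1 ≤ |h|ₘ ⊓ |k|ₘ := le_inf (one_le_mabs h) (one_le_mabs k)
  exact Subgroup.mem_inf.mpr
    ⟨mem_of_one_le_of_le hHconvex one_le inf_le_left (mabs_mem_of_supClosed_s13 hHsup hh),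
      mem_of_one_le_of_le hKconvex one_le inf_le_right (mabs_mem_of_supClosed_s13 hKsup hk)⟩

lemma OrthogonalModulo.inf_le {I : Subgroup X} (h : OrthogonalModulo (H : Set X) K I)
    (hI : (I : Set X).OrdConnected) : H ⊓ K ≤ I :=
  fun _ hx => mem_of_mabs_mem hI (h.mabs_mem hx.1 hx.2)

theorem huq_commutator_eq_inter_general
    (hHsup : SupClosed (H : Set X)) (hKsup : SupClosed (K : Set X))
    (hHconvex : (H : Set X).OrdConnected) (hKconvex : (K : Set X).OrdConnected) :
    IsLeast {I : Subgroup X | (I : Set X).OrdConnected ∧ OrthogonalModulo (H : Set X) K I}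
      (H ⊓ K) :=
  ⟨⟨hHconvex.inter hKconvex, orthogonalModulo_inf hHsup hKsup hHconvex hKconvex⟩,
    fun _ hI => hI.2.inf_le hI.1⟩

end Orthogonal

/-- For ℓ-ideals `H`, `K` of a lattice-ordered group `X`, the intersection `H ∩ K` is the
smallest ℓ-ideal `I` such that the images of `H` and `K` in `X/I` are orthogonal;
i.e. the Huq commutator `[H,K]` equals `H ∩ K`. -/
theorem huq_commutator_eq_inter {X : Type*} [Lattice X] [Group X]
    [CovariantClass X X (· * ·) (· ≤ ·)]
    [CovariantClass X X (Function.swap (· * ·)) (· ≤ ·)]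
    (H K : Subgroup X) (hHnormal : H.Normal) (hKnormal : K.Normal)
    (hHsup : ∀ a b : X, a ∈ H → b ∈ H → a ⊔ b ∈ H)
    (hKsup : ∀ a b : X, a ∈ K → b ∈ K → a ⊔ b ∈ K)
    (hHconvex : ∀ a x b : X, a ∈ H → b ∈ H → a ≤ x → x ≤ b → x ∈ H)
    (hKconvex : ∀ a x b : X, a ∈ K → b ∈ K → a ≤ x → x ≤ b → x ∈ K) :
    -- (i) the images of `H` and `K` in the quotient by `H ∩ K` are orthogonal
    (∀ h : X, h ∈ H → ∀ k : X, k ∈ K → (h ⊔ h⁻¹) ⊓ (k ⊔ k⁻¹) ∈ H ⊓ K) ∧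
    -- (ii) `H ∩ K` is contained in any ℓ-ideal `I` with this property
    (∀ I : Subgroup X, I.Normal →
      (∀ a b : X, a ∈ I → b ∈ I → a ⊔ b ∈ I) →
      (∀ a x b : X, a ∈ I → b ∈ I → a ≤ x → x ≤ b → x ∈ I) →
      (∀ h : X, h ∈ H → ∀ k : X, k ∈ K → (h ⊔ h⁻¹) ⊓ (k ⊔ k⁻¹) ∈ I) →
      H ⊓ K ≤ I) := by
  obtain ⟨⟨-, hinf⟩, hleast⟩ := huq_commutator_eq_inter_general
    (fun _ ha _ hb => hHsup _ _ ha hb) (fun _ ha _ hb => hKsup _ _ ha hb)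
    (ordConnected_of_forall_le_le hHconvex) (ordConnected_of_forall_le_le hKconvex)
  exact ⟨hinf, fun I _ _ hIconvex hI => hleast ⟨ordConnected_of_forall_le_le hIconvex, hI⟩⟩
end

section
/- In every abelian (commutative) lattice-ordered group, for all elements k, h, b the identity (k*h*b ⊔ 1)*(b ⊔ 1)⁻¹ = (k ⊓ h) * ( (k⁻¹*(k^2*b ⊔ 1)*(b ⊔ 1)⁻¹) ⊔ (h⁻¹*(h^2*b ⊔ 1)*(b ⊔ 1)⁻¹) ) holds. In particular, ((k ⊔ h)*b ⊔ (k ⊓ h)⁻¹)*(b ⊔ 1)⁻¹ = (k⁻¹*(k^2*b ⊔ 1)*(b ⊔ 1)⁻¹) ⊔ (h⁻¹*(h^2*b ⊔ 1)*(b ⊔ 1)⁻¹) and (k*h*b ⊔ 1)*(b ⊔ 1)⁻¹ = (k ⊓ h)*((k ⊔ h)*b ⊔ (k ⊓ h)⁻¹)*(b ⊔ 1)⁻¹. -/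
theorem inv_mul_sq_mul_sup_one {G : Type*} [Lattice G] [Group G] [MulLeftMono G] (k b : G) :
    k⁻¹ * (k ^ 2 * b ⊔ 1) = k * b ⊔ k⁻¹ := by
  rw [mul_sup, mul_one, pow_two, mul_assoc, inv_mul_cancel_left]

theorem sup_mul_sup_inv_inf {G : Type*} [Lattice G] [Group G] [MulLeftMono G] [MulRightMono G]
    (k h b : G) : (k ⊔ h) * b ⊔ (k ⊓ h)⁻¹ = (k * b ⊔ k⁻¹) ⊔ (h * b ⊔ h⁻¹) := by
  rw [sup_mul, inv_inf, sup_sup_sup_comm]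

theorem inf_mul_sup_mul_sup_inv_inf {G : Type*} [Lattice G] [CommGroup G] [MulLeftMono G]
    (k h b : G) : (k ⊓ h) * ((k ⊔ h) * b ⊔ (k ⊓ h)⁻¹) = k * h * b ⊔ 1 := by
  rw [mul_sup, ← mul_assoc, inf_mul_sup, mul_inv_cancel]

/-- Identities in an abelian lattice-ordered group used in the proof of algebraic
coherence of `ℓAb`. -/
theorem abelian_lgroup_identities {A : Type*} [Lattice A] [CommGroup A]
    [CovariantClass A A (· * ·) (· ≤ ·)] :
    ∀ k h b : A,
      (k * h * b ⊔ 1) * (b ⊔ 1)⁻¹ =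
        (k ⊓ h) * ((k⁻¹ * (k ^ 2 * b ⊔ 1) * (b ⊔ 1)⁻¹) ⊔
          (h⁻¹ * (h ^ 2 * b ⊔ 1) * (b ⊔ 1)⁻¹)) ∧
      ((k ⊔ h) * b ⊔ (k ⊓ h)⁻¹) * (b ⊔ 1)⁻¹ =
        (k⁻¹ * (k ^ 2 * b ⊔ 1) * (b ⊔ 1)⁻¹) ⊔ (h⁻¹ * (h ^ 2 * b ⊔ 1) * (b ⊔ 1)⁻¹) ∧
      (k * h * b ⊔ 1) * (b ⊔ 1)⁻¹ =
        (k ⊓ h) * (((k ⊔ h) * b ⊔ (k ⊓ h)⁻¹) * (b ⊔ 1)⁻¹) := by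
  intro k h b
  have hsup : ((k ⊔ h) * b ⊔ (k ⊓ h)⁻¹) * (b ⊔ 1)⁻¹ =
      (k⁻¹ * (k ^ 2 * b ⊔ 1) * (b ⊔ 1)⁻¹) ⊔ (h⁻¹ * (h ^ 2 * b ⊔ 1) * (b ⊔ 1)⁻¹) := by
    rw [inv_mul_sq_mul_sup_one, inv_mul_sq_mul_sup_one, sup_mul_sup_inv_inf, sup_mul]
  have hprod : (k * h * b ⊔ 1) * (b ⊔ 1)⁻¹ =
      (k ⊓ h) * (((k ⊔ h) * b ⊔ (k ⊓ h)⁻¹) * (b ⊔ 1)⁻¹) := by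
    rw [← mul_assoc, inf_mul_sup_mul_sup_inv_inf]
  exact ⟨hsup ▸ hprod, hsup, hprod⟩
end

section
/- Let A be an abelian lattice-ordered group, B a subgroup of A, and L a subgroup of A. Then the following are equivalent: (i) (l₁*b₁ ⊔ l₂*b₂)*(b₁ ⊔ b₂)⁻¹ ∈ L for all l₁, l₂ ∈ L and b₁, b₂ ∈ B; (ii) (l*b ⊔ 1)*(b ⊔ 1)⁻¹ ∈ L for all l ∈ L and b ∈ B. (This follows from the identity, valid for all elements of an abelian ℓ-group: (l₁*b₁ ⊔ l₂*b₂)*(b₁ ⊔ b₂)⁻¹ = l₂ * (l₂⁻¹*l₁*b₁*b₂⁻¹ ⊔ 1) * (b₁*b₂⁻¹ ⊔ 1)⁻¹.) -/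
/-!
Factoring `l₂` out on the left and `b₂` on the right turns `l₁ * b₁ ⊔ l₂ * b₂` and `b₁ ⊔ b₂` into
joins with `1`. In the quotient the two right factors `b₂` meet and cancel, while `L` absorbs the
left factor `l₂`; what remains is the one-variable expression at `l₂⁻¹ * l₁` and `b₁ * b₂⁻¹`.
-/

section LatticeOrderedGroup

variable {G : Type*} [Lattice G] [Group G] [MulRightMono G]

theorem sup_eq_mul_inv_sup_one_mul (a b : G) : a ⊔ b = (a * b⁻¹ ⊔ 1) * b := by
  rw [sup_mul, inv_mul_cancel_right, one_mul]

variable [MulLeftMono G]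

theorem mul_sup_mul_eq_mul_sup_one_mul (l₁ l₂ b₁ b₂ : G) :
    l₁ * b₁ ⊔ l₂ * b₂ = l₂ * (l₂⁻¹ * l₁ * (b₁ * b₂⁻¹) ⊔ 1) * b₂ := by
  rw [mul_sup, sup_mul, mul_one]
  congr 1
  group

theorem mul_sup_mul_mul_inv_sup (l₁ l₂ b₁ b₂ : G) :
    (l₁ * b₁ ⊔ l₂ * b₂) * (b₁ ⊔ b₂)⁻¹ =
      l₂ * ((l₂⁻¹ * l₁ * (b₁ * b₂⁻¹) ⊔ 1) * (b₁ * b₂⁻¹ ⊔ 1)⁻¹) := by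
  rw [mul_sup_mul_eq_mul_sup_one_mul, sup_eq_mul_inv_sup_one_mul b₁ b₂, mul_inv_rev,
    ← mul_assoc, mul_inv_cancel_right, mul_assoc]

theorem closed_action_iff_simple_general (B L : Subgroup G) :
    (∀ l₁ ∈ L, ∀ l₂ ∈ L, ∀ b₁ ∈ B, ∀ b₂ ∈ B, (l₁ * b₁ ⊔ l₂ * b₂) * (b₁ ⊔ b₂)⁻¹ ∈ L) ↔
      ∀ l ∈ L, ∀ b ∈ B, (l * b ⊔ 1) * (b ⊔ 1)⁻¹ ∈ L := by
  constructor
  · intro two_variable l hl b hb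
    simpa only [one_mul] using two_variable l hl 1 L.one_mem b hb 1 B.one_mem
  · intro one_variable l₁ hl₁ l₂ hl₂ b₁ hb₁ b₂ hb₂
    have hl : l₂⁻¹ * l₁ ∈ L := L.mul_mem (L.inv_mem hl₂) hl₁
    have hb : b₁ * b₂⁻¹ ∈ B := B.mul_mem hb₁ (B.inv_mem hb₂)
    rw [mul_sup_mul_mul_inv_sup]
    exact L.mul_mem hl₂ (one_variable _ hl _ hb)

end LatticeOrderedGroup

/-- For an abelian lattice-ordered group, a subgroup `L` is closed under the two-variable
action condition iff it is closed under the one-variable one. -/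
theorem closed_action_iff_simple {A : Type*} [Lattice A] [CommGroup A]
    [CovariantClass A A (· * ·) (· ≤ ·)]
    (B : Subgroup A) (L : Subgroup A) :
    (∀ l₁ : A, l₁ ∈ L → ∀ l₂ : A, l₂ ∈ L → ∀ b₁ : A, b₁ ∈ B → ∀ b₂ : A, b₂ ∈ B →
        (l₁ * b₁ ⊔ l₂ * b₂) * (b₁ ⊔ b₂)⁻¹ ∈ L) ↔
      (∀ l : A, l ∈ L → ∀ b : A, b ∈ B → (l * b ⊔ 1) * (b ⊔ 1)⁻¹ ∈ L) :=
  closed_action_iff_simple_general B L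
end

section
/- Let A be an abelian lattice-ordered group, B a sub-ℓ-group of A, and K, H sub-ℓ-groups of A that are closed under the action of B, meaning (k*b ⊔ 1)*(b ⊔ 1)⁻¹ ∈ K for all k ∈ K, b ∈ B, and (h*b ⊔ 1)*(b ⊔ 1)⁻¹ ∈ H for all h ∈ H, b ∈ B. Let L ⊆ A be the sub-ℓ-group generated by K ∪ H, i.e., a subset containing K ∪ H, closed under multiplication, inverses, ⊔ and ⊓, and contained in every subset of A with these properties containing K ∪ H. Then L is closed under the action of B: (z*b ⊔ 1)*(b ⊔ 1)⁻¹ ∈ L for all z ∈ L and b ∈ B. (This is the key step showing that the category of abelian lattice-ordered groups is algebraically coherent.) -/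
/-!
Write `p = b ⊔ 1` and `n = b⁻¹ ⊔ 1`. The action of `b` sends `x` to `x * n⁻¹ ⊔ p⁻¹`, and since `p`
and `n` are orthogonal this equals `x * (|x| ⊓ n)⁻¹ ⊔ (|x| ⊓ p)⁻¹`. Hence a sub-ℓ-group is closed
under the action of `b` exactly when it is closed under the truncations `x ↦ x ⊓ p` and `x ↦ x ⊓ n`
of its elements `x ≥ 1`. Truncation passes to joins because `(x * y) ⊓ p` is determined by `x * y`
and the truncations of `x ^ 2` and `y ^ 2`: indeed `x * y ≤ x ^ 2 ⊔ y ^ 2`, and the lattice is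
distributive.
-/

section Action

variable {A : Type*} [Lattice A] [Group A] [MulLeftMono A] [MulRightMono A] {b x : A}

theorem action_eq_mul_inv_leOnePart_sup_inv_oneLePart (b x : A) :
    (x * b ⊔ 1) * (b ⊔ 1)⁻¹ = x * (b⁻ᵐ)⁻¹ ⊔ (b⁺ᵐ)⁻¹ := by
  have mul_inv_oneLePart : b * (b⁺ᵐ)⁻¹ = (b⁻ᵐ)⁻¹ := by
    rw [leOnePart_eq_inv_inf_one, inv_inv, oneLePart_def, inv_sup, inv_one, mul_inf,
      mul_inv_cancel, mul_one, inf_comm]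
  rw [← oneLePart_def b, sup_mul, one_mul, mul_assoc, mul_inv_oneLePart]

theorem inf_one_le_action (b x : A) : x ⊓ 1 ≤ (x * b ⊔ 1) * (b ⊔ 1)⁻¹ :=
  calc x ⊓ 1 = (x ⊓ 1) * ((b⁻ᵐ)⁻¹ ⊔ (b⁺ᵐ)⁻¹) := by
        rw [← inv_inf, inf_comm (b⁻ᵐ), oneLePart_inf_leOnePart_eq_one, inv_one, mul_one]
    _ = (x ⊓ 1) * (b⁻ᵐ)⁻¹ ⊔ (x ⊓ 1) * (b⁺ᵐ)⁻¹ := mul_sup _ _ _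
    _ ≤ x * (b⁻ᵐ)⁻¹ ⊔ (b⁺ᵐ)⁻¹ :=
        sup_le_sup (mul_le_mul_left inf_le_left _) (mul_le_of_le_one_left' inf_le_right)
    _ = (x * b ⊔ 1) * (b ⊔ 1)⁻¹ := (action_eq_mul_inv_leOnePart_sup_inv_oneLePart b x).symm

theorem action_eq_truncated (b x : A) :
    (x * b ⊔ 1) * (b ⊔ 1)⁻¹ = x * (|x|ₘ ⊓ b⁻ᵐ)⁻¹ ⊔ (|x|ₘ ⊓ b⁺ᵐ)⁻¹ := by
  have inv_mabs_le : |x|ₘ⁻¹ ≤ x ⊓ 1 :=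
    le_inf (inv_le'.mp (inv_le_mabs x)) (inv_le_one'.mpr (one_le_mabs x))
  have mul_inv_mabs_le : x * |x|ₘ⁻¹ ≤ x ⊓ 1 :=
    le_inf (mul_le_of_le_one_right' (inv_le_one'.mpr (one_le_mabs x)))
      (mul_inv_le_one_iff_le.mpr (le_mabs_self x))
  calc (x * b ⊔ 1) * (b ⊔ 1)⁻¹
      = (x * |x|ₘ⁻¹ ⊔ |x|ₘ⁻¹) ⊔ (x * b ⊔ 1) * (b ⊔ 1)⁻¹ :=
        (sup_eq_right.mpr
          ((sup_le mul_inv_mabs_le inv_mabs_le).trans (inf_one_le_action b x))).symm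
    _ = x * (|x|ₘ ⊓ b⁻ᵐ)⁻¹ ⊔ (|x|ₘ ⊓ b⁺ᵐ)⁻¹ := by
        rw [action_eq_mul_inv_leOnePart_sup_inv_oneLePart, sup_sup_sup_comm, ← mul_sup,
          ← inv_inf, ← inv_inf]

theorem action_of_one_le (hx : 1 ≤ x) :
    (x * b ⊔ 1) * (b ⊔ 1)⁻¹ = x * (x ⊓ b⁻ᵐ)⁻¹ := by
  rw [action_eq_truncated, mabs_of_one_le hx]
  refine sup_eq_left.mpr ((inv_le_one'.mpr (le_inf hx (one_le_oneLePart b))).trans ?_)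
  exact le_mul_inv_iff_le.mpr inf_le_left

theorem action_inv_of_one_le (hx : 1 ≤ x) :
    (x⁻¹ * b ⊔ 1) * (b ⊔ 1)⁻¹ = (x ⊓ b⁺ᵐ)⁻¹ := by
  rw [action_eq_truncated, mabs_inv, mabs_of_one_le hx]
  refine sup_eq_right.mpr (le_trans ?_ (inv_le_inv_iff.mpr inf_le_left))
  exact mul_le_of_le_one_right' (inv_le_one'.mpr (le_inf hx (one_le_leOnePart b)))

end Action

section CommGroup

variable {A : Type*} [Lattice A] [CommGroup A] [MulLeftMono A]

theorem mul_le_sq_sup_sq (x y : A) : x * y ≤ x ^ 2 ⊔ y ^ 2 :=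
  calc x * y ≤ x * y * |x / y|ₘ := le_mul_of_one_le_right' (one_le_mabs _)
    _ = x ^ 2 ⊔ y ^ 2 := by
        rw [mabs, inv_div, mul_sup, mul_mul_div_cancel, mul_comm x y, mul_mul_div_cancel, sq, sq]

theorem mabs_sup_le_mabs_mul_mabs (x y : A) : |x ⊔ y|ₘ ≤ |x|ₘ * |y|ₘ := by
  have hx : |x|ₘ ≤ |x|ₘ * |y|ₘ := le_mul_of_one_le_right' (one_le_mabs y)
  have hy : |y|ₘ ≤ |x|ₘ * |y|ₘ := le_mul_of_one_le_left' (one_le_mabs x)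
  exact sup_le (sup_le ((le_mabs_self x).trans hx) ((le_mabs_self y).trans hy))
    ((inv_le_inv_iff.mpr le_sup_left).trans ((inv_le_mabs x).trans hx))

end CommGroup

/-- A sub-ℓ-group of a lattice-ordered group: a subgroup closed under `⊔`. Closure under `⊓` is
derived in `LSubgroup.inf_mem`. -/
structure LSubgroup (A : Type*) [Lattice A] [Group A] extends Subgroup A where
  sup_mem' {x y : A} : x ∈ carrier → y ∈ carrier → x ⊔ y ∈ carrier

namespace LSubgroup

section Group

variable {A : Type*} [Lattice A] [Group A]

instance : SetLike (LSubgroup A) A where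
  coe L := L.carrier
  coe_injective K L h := by
    cases K
    cases L
    congr
    exact SetLike.coe_injective h

instance : PartialOrder (LSubgroup A) := .ofSetLike (LSubgroup A) A

instance : SubgroupClass (LSubgroup A) A where
  mul_mem {L} := L.mul_mem'
  one_mem L := L.one_mem'
  inv_mem {L} := L.inv_mem'

variable {L : LSubgroup A} {x y : A}

theorem sup_mem (hx : x ∈ L) (hy : y ∈ L) : x ⊔ y ∈ L :=
  L.sup_mem' hx hy

theorem mabs_mem (hx : x ∈ L) : |x|ₘ ∈ L :=
  sup_mem hx (inv_mem hx)

/-- Closure of a sub-ℓ-group under the action of a single element `b`. -/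
def IsClosedUnderAction (L : LSubgroup A) (b : A) : Prop :=
  ∀ x ∈ L, (x * b ⊔ 1) * (b ⊔ 1)⁻¹ ∈ L

/-- Closure of the positive cone of a sub-ℓ-group under meets with an element `p`, which need not
belong to the sub-ℓ-group. -/
def IsClosedUnderTruncation (L : LSubgroup A) (p : A) : Prop :=
  ∀ x ∈ L, 1 ≤ x → x ⊓ p ∈ L

variable [MulLeftMono A] [MulRightMono A]

theorem inf_mem (hx : x ∈ L) (hy : y ∈ L) : x ⊓ y ∈ L := by
  rw [← inv_inv (x ⊓ y), inv_inf]
  exact inv_mem (sup_mem (inv_mem hx) (inv_mem hy))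

theorem isClosedUnderAction_iff {b : A} : L.IsClosedUnderAction b ↔
    L.IsClosedUnderTruncation b⁺ᵐ ∧ L.IsClosedUnderTruncation b⁻ᵐ := by
  refine ⟨fun hact ↦ ⟨fun x hx hx1 ↦ ?_, fun x hx hx1 ↦ ?_⟩, fun ⟨hpos, hneg⟩ x hx ↦ ?_⟩
  · exact inv_mem_iff.mp (action_inv_of_one_le hx1 ▸ hact x⁻¹ (inv_mem hx))
  · have : x * (x ⊓ b⁻ᵐ)⁻¹ ∈ L := action_of_one_le hx1 ▸ hact x hx
    exact inv_mem_iff.mp ((mul_mem_cancel_left hx).mp this)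
  · rw [action_eq_truncated]
    exact sup_mem (mul_mem hx (inv_mem (hneg _ (mabs_mem hx) (one_le_mabs x))))
      (inv_mem (hpos _ (mabs_mem hx) (one_le_mabs x)))

end Group

section CommGroup

variable {A : Type*} [Lattice A] [CommGroup A] [MulLeftMono A]

variable {L : LSubgroup A} {p x y z : A}

theorem mabs_pow_inf_mem (hx : ∀ n : ℕ, |x|ₘ ^ n ⊓ p ∈ L) (hy : ∀ n : ℕ, |y|ₘ ^ n ⊓ p ∈ L)
    (hz : z ∈ L) (hzxy : |z|ₘ ≤ |x|ₘ * |y|ₘ) (n : ℕ) : |z|ₘ ^ n ⊓ p ∈ L := by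
  let := CommGroup.toDistribLattice A
  have hbound : |z|ₘ ^ n ≤ |x|ₘ ^ (n * 2) ⊔ |y|ₘ ^ (n * 2) :=
    calc |z|ₘ ^ n ≤ (|x|ₘ * |y|ₘ) ^ n := pow_le_pow_left' hzxy n
      _ = |x|ₘ ^ n * |y|ₘ ^ n := mul_pow _ _ _
      _ ≤ |x|ₘ ^ (n * 2) ⊔ |y|ₘ ^ (n * 2) := by
        simpa only [pow_mul] using mul_le_sq_sup_sq (|x|ₘ ^ n) (|y|ₘ ^ n)
  have heq : |z|ₘ ^ n ⊓ p = |z|ₘ ^ n ⊓ (|x|ₘ ^ (n * 2) ⊓ p ⊔ |y|ₘ ^ (n * 2) ⊓ p) := by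
    rw [← inf_sup_right, ← inf_assoc, inf_eq_left.mpr hbound]
  rw [heq]
  exact inf_mem (pow_mem (mabs_mem hz) n) (sup_mem (hx _) (hy _))

/-- The largest sub-ℓ-group inside `L` on which truncation at `p` takes values in `L`. All powers of
`|x|ₘ` are required since truncating a product involves the squares of its factors. -/
def truncationCore (L : LSubgroup A) (p : A) (hp : 1 ≤ p) : LSubgroup A where
  carrier := {x | x ∈ L ∧ ∀ n : ℕ, |x|ₘ ^ n ⊓ p ∈ L}
  mul_mem' {x y} hx hy :=
    have hxy := mul_mem hx.1 hy.1
    ⟨hxy, mabs_pow_inf_mem hx.2 hy.2 hxy (mabs_mul_le x y)⟩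
  one_mem' := ⟨one_mem L, fun n ↦ by
    rw [mabs_one, one_pow, inf_eq_left.mpr hp]
    exact one_mem L⟩
  inv_mem' {x} hx := ⟨inv_mem hx.1, (mabs_inv x).symm ▸ hx.2⟩
  sup_mem' {x y} hx hy :=
    have hxy := sup_mem hx.1 hy.1
    ⟨hxy, mabs_pow_inf_mem hx.2 hy.2 hxy (mabs_sup_le_mabs_mul_mabs x y)⟩

theorem IsClosedUnderTruncation.le_truncationCore {K : LSubgroup A}
    (hK : K.IsClosedUnderTruncation p) (hp : 1 ≤ p) (hKL : K ≤ L) : K ≤ L.truncationCore p hp :=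
  fun x hx ↦ ⟨hKL hx, fun n ↦
    hKL (hK _ (pow_mem (mabs_mem hx) n) (one_le_pow_of_one_le' (one_le_mabs x) n))⟩

theorem isClosedUnderTruncation_of_isLUB {𝒦 : Set (LSubgroup A)} (hp : 1 ≤ p)
    (h𝒦 : ∀ K ∈ 𝒦, K.IsClosedUnderTruncation p) (hL : IsLUB 𝒦 L) :
    L.IsClosedUnderTruncation p := by
  intro x hx hx1
  have hcore : L ≤ L.truncationCore p hp :=
    hL.2 fun K hK ↦ (h𝒦 K hK).le_truncationCore hp (hL.1 hK)
  simpa only [pow_one, mabs_of_one_le hx1] using (hcore hx).2 1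

end CommGroup

end LSubgroup

theorem join_closed_under_action_general {A : Type*} [Lattice A] [CommGroup A] [MulLeftMono A]
    {𝒦 : Set (LSubgroup A)} {L : LSubgroup A} {b : A}
    (h𝒦 : ∀ K ∈ 𝒦, K.IsClosedUnderAction b) (hL : IsLUB 𝒦 L) : L.IsClosedUnderAction b := by
  simp only [LSubgroup.isClosedUnderAction_iff] at h𝒦 ⊢
  exact ⟨LSubgroup.isClosedUnderTruncation_of_isLUB (one_le_oneLePart b)
      (fun K hK ↦ (h𝒦 K hK).1) hL,
    LSubgroup.isClosedUnderTruncation_of_isLUB (one_le_leOnePart b)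
      (fun K hK ↦ (h𝒦 K hK).2) hL⟩

/-- In an abelian lattice-ordered group, the sub-ℓ-group generated by two sub-ℓ-groups
closed under the action of `B` is itself closed under the action of `B`. -/
theorem join_closed_under_action {A : Type*} [Lattice A] [CommGroup A]
    [CovariantClass A A (· * ·) (· ≤ ·)]
    (B : Subgroup A) (hBsup : ∀ a b : A, a ∈ B → b ∈ B → a ⊔ b ∈ B)
    (K H : Subgroup A)
    (hKsup : ∀ a b : A, a ∈ K → b ∈ K → a ⊔ b ∈ K)
    (hHsup : ∀ a b : A, a ∈ H → b ∈ H → a ⊔ b ∈ H)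
    (hKact : ∀ k : A, k ∈ K → ∀ b : A, b ∈ B → (k * b ⊔ 1) * (b ⊔ 1)⁻¹ ∈ K)
    (hHact : ∀ h : A, h ∈ H → ∀ b : A, b ∈ B → (h * b ⊔ 1) * (b ⊔ 1)⁻¹ ∈ H)
    -- `L` is the sub-ℓ-group generated by `K ∪ H`
    (L : Set A)
    (hKL : (K : Set A) ⊆ L) (hHL : (H : Set A) ⊆ L)
    (hLmul : ∀ x ∈ L, ∀ y ∈ L, x * y ∈ L)
    (hLinv : ∀ x ∈ L, x⁻¹ ∈ L)
    (hLsup : ∀ x ∈ L, ∀ y ∈ L, x ⊔ y ∈ L)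
    (hLinf : ∀ x ∈ L, ∀ y ∈ L, x ⊓ y ∈ L)
    (hLmin : ∀ M : Set A, (K : Set A) ⊆ M → (H : Set A) ⊆ M →
      (∀ x ∈ M, ∀ y ∈ M, x * y ∈ M) → (∀ x ∈ M, x⁻¹ ∈ M) →
      (∀ x ∈ M, ∀ y ∈ M, x ⊔ y ∈ M) → (∀ x ∈ M, ∀ y ∈ M, x ⊓ y ∈ M) → L ⊆ M) :
    ∀ z ∈ L, ∀ b : A, b ∈ B → (z * b ⊔ 1) * (b ⊔ 1)⁻¹ ∈ L := by
  intro z hz b hb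
  let L' : LSubgroup A :=
    { carrier := L
      mul_mem' := fun hx hy ↦ hLmul _ hx _ hy
      one_mem' := hKL K.one_mem
      inv_mem' := fun hx ↦ hLinv _ hx
      sup_mem' := fun hx hy ↦ hLsup _ hx _ hy }
  have hL' : IsLUB {⟨K, hKsup _ _⟩, ⟨H, hHsup _ _⟩} L' := by
    refine ⟨by simpa using ⟨hKL, hHL⟩, fun M hM ↦ ?_⟩
    simp only [upperBounds_insert, upperBounds_singleton] at hM
    exact hLmin M hM.1 hM.2 (fun _ hx _ hy ↦ mul_mem hx hy) (fun _ hx ↦ inv_mem hx)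
      (fun _ hx _ hy ↦ M.sup_mem hx hy) (fun _ hx _ hy ↦ M.inf_mem hx hy)
  exact join_closed_under_action_general
    (by simpa using ⟨fun k hk ↦ hKact k hk b hb, fun h hh ↦ hHact h hh b hb⟩) hL' z hz
end

section
/- Let A be an abelian lattice-ordered group and K, H sub-ℓ-groups of A. Let L ⊆ A be the sub-ℓ-group generated by K ∪ H, i.e., a subset containing K ∪ H, closed under multiplication, inverses, ⊔ and ⊓, and contained in every subset of A with these properties containing K ∪ H. Then every element z ∈ L can be written as z = ⨆_{i ∈ I} ⨅_{j ∈ J} k_{i,j}*h_{i,j} for some nonempty finite index sets I, J and elements k_{i,j} ∈ K, h_{i,j} ∈ H (a finite join of finite meets of products of an element of K with an element of H). -/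
/-!
In a lattice-ordered group the translations are lattice automorphisms and inversion is a lattice
anti-automorphism, so the sublattice generated by a subgroup `P` is again a subgroup; hence it is
the sub-ℓ-group generated by `P`. The lattice is distributive, so the elements of this sublattice
are finite joins of finite meets of elements of `P`. For permuting subgroups `K` and `H`, take
`P = K * H`.
-/

open Filter Finset
open scoped Pointwise

section EventualEnumeration

variable {α : Type*} {s : Set α} {x : α}

lemma eventually_image_range_eq [DecidableEq α] {f : ℕ → α} {t : Finset α}
    (hf : Set.range f = t) : ∀ᶠ n in atTop, (range (n + 1)).image f = t := by
  have hmem : ∀ a ∈ t, ∀ᶠ n in atTop, a ∈ (range (n + 1)).image f := by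
    intro a ha
    obtain ⟨m, rfl⟩ : a ∈ Set.range f := hf ▸ ha
    filter_upwards [eventually_ge_atTop m] with n hn
    exact mem_image_of_mem f (mem_range_succ_iff.2 hn)
  filter_upwards [(eventually_all_finset t).2 hmem] with n hn
  refine Subset.antisymm (image_subset_iff.2 fun i _ => ?_) hn
  exact mem_coe.1 (hf ▸ Set.mem_range_self i)

lemma exists_eventually_inf'_range_eq_of_mem_infClosure [SemilatticeInf α]
    (hx : x ∈ infClosure s) :
    ∃ f : ℕ → α, (∀ j, f j ∈ s) ∧
      ∀ᶠ n in atTop, (range (n + 1)).inf' nonempty_range_add_one f = x := by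
  classical
  obtain ⟨t, ht, hts, rfl⟩ := hx
  obtain ⟨f, hf⟩ := t.countable_toSet.exists_eq_range ht
  refine ⟨f, fun j => hts (hf ▸ Set.mem_range_self j), ?_⟩
  filter_upwards [eventually_image_range_eq hf.symm] with n hn
  subst hn
  exact (inf'_image ht id).symm

lemma exists_eventually_sup'_range_eq_of_mem_supClosure [SemilatticeSup α]
    (hx : x ∈ supClosure s) :
    ∃ f : ℕ → α, (∀ i, f i ∈ s) ∧
      ∀ᶠ n in atTop, (range (n + 1)).sup' nonempty_range_add_one f = x :=
  exists_eventually_inf'_range_eq_of_mem_infClosure (α := αᵒᵈ) hx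

-- The meets share one index set since their eventual equalities hold simultaneously for some `n`.
lemma exists_sup'_inf'_range_eq_of_mem_supClosure_infClosure [Lattice α]
    (hx : x ∈ supClosure (infClosure s)) :
    ∃ (m n : ℕ) (p : ℕ → ℕ → α), (∀ i j, p i j ∈ s) ∧
      (range (m + 1)).sup' nonempty_range_add_one
        (fun i => (range (n + 1)).inf' nonempty_range_add_one (p i)) = x := by
  obtain ⟨g, hg, hgx⟩ := exists_eventually_sup'_range_eq_of_mem_supClosure hx
  choose p hp hpg using fun i => exists_eventually_inf'_range_eq_of_mem_infClosure (hg i)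
  obtain ⟨m, hm⟩ := hgx.exists
  obtain ⟨n, hn⟩ := ((eventually_all_finset (range (m + 1))).2 fun i _ => hpg i).exists
  exact ⟨m, n, p, hp, (sup'_congr _ rfl hn).trans hm⟩

end EventualEnumeration

section PermutingSubgroups

variable {G : Type*} [Group G] {K H : Subgroup G}

lemma coe_sup_eq_mul_of_mul_comm (hKH : (K * H : Set G) = H * K) :
    ((K ⊔ H : Subgroup G) : Set G) = K * H := by
  have hmul : (K * H : Set G) * (K * H) = K * H := by
    calc (K * H : Set G) * (K * H) = K * (H * K) * H := by simp only [mul_assoc]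
      _ = (K * K) * (H * H) := by rw [← hKH]; simp only [mul_assoc]
      _ = K * H := by rw [coe_mul_coe, coe_mul_coe]
  have hinv : (K * H : Set G)⁻¹ = K * H := by
    rw [mul_inv_rev, inv_coe_set, inv_coe_set, hKH]
  let KH : Subgroup G :=
    { carrier := K * H
      one_mem' := ⟨1, K.one_mem, 1, H.one_mem, one_mul 1⟩
      mul_mem' := fun hx hy => hmul ▸ Set.mul_mem_mul hx hy
      inv_mem' := fun hx => hinv ▸ Set.inv_mem_inv.2 hx }
  rw [Subgroup.sup_eq_closure_mul]
  exact Set.Subset.antisymm ((Subgroup.closure_le KH).2 Set.Subset.rfl) Subgroup.subset_closure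

end PermutingSubgroups

section LatticeOrderedGroup

variable {A : Type*} [Lattice A] [Group A] [MulLeftMono A] [MulRightMono A]

lemma inf_sup_le_of_group (x a b : A) : x ⊓ (a ⊔ b) ≤ (x ⊓ a) ⊔ (x ⊓ b) := by
  have translate_le {c : A} (hc : c ≤ a ⊔ b) : c * (a ⊔ b)⁻¹ * (x ⊓ (a ⊔ b)) ≤ x ⊓ c := by
    rw [mul_inf, inv_mul_cancel_right]
    exact inf_le_inf_right c (mul_le_of_le_one_left' (mul_inv_le_one_iff_le.2 hc))
  calc x ⊓ (a ⊔ b) = (a ⊔ b) * (a ⊔ b)⁻¹ * (x ⊓ (a ⊔ b)) := by rw [mul_inv_cancel, one_mul]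
    _ = a * (a ⊔ b)⁻¹ * (x ⊓ (a ⊔ b)) ⊔ b * (a ⊔ b)⁻¹ * (x ⊓ (a ⊔ b)) := by
      simp only [← sup_mul]
    _ ≤ (x ⊓ a) ⊔ (x ⊓ b) := sup_le_sup (translate_le le_sup_left) (translate_le le_sup_right)

lemma supClosure_infClosure_of_group (s : Set A) :
    supClosure (infClosure s) = latticeClosure s :=
  letI := DistribLattice.ofInfSupLe (inf_sup_le_of_group (A := A))
  supClosure_infClosure s

lemma inv_latticeClosure (s : Set A) : (latticeClosure s)⁻¹ = latticeClosure s⁻¹ := by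
  simpa only [Set.image_inv_eq_inv] using image_latticeClosure' s (·⁻¹) inv_sup inv_inf

lemma latticeClosure_mul_subset (s t : Set A) :
    latticeClosure s * latticeClosure t ⊆ latticeClosure (s * t) := by
  rintro _ ⟨x, hx, y, hy, rfl⟩
  induction hx using latticeClosure_sup_inf_induction with
  | mem a ha =>
    have hat : a • latticeClosure t = latticeClosure (a • t) :=
      image_latticeClosure t (a * ·) (fun b c => mul_sup b c a) (fun b c => mul_inf b c a)
    exact latticeClosure_mono (Set.smul_set_subset_mul ha) (hat ▸ Set.smul_mem_smul_set hy)
  | sup a _ b _ iha ihb =>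
    simpa only [sup_mul] using isSublattice_latticeClosure.supClosed iha ihb
  | inf a _ b _ iha ihb =>
    simpa only [inf_mul] using isSublattice_latticeClosure.infClosed iha ihb

/-- The sublattice generated by a subgroup `P` of a lattice-ordered group, as a subgroup. It is the
sub-ℓ-group generated by `P`. -/
def latticeClosureSubgroup (P : Subgroup A) : Subgroup A where
  carrier := latticeClosure (P : Set A)
  one_mem' := subset_latticeClosure P.one_mem
  mul_mem' hx hy := by
    simpa only [coe_mul_coe] using latticeClosure_mul_subset (P : Set A) P (Set.mul_mem_mul hx hy)
  inv_mem' hx := by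
    simpa only [inv_latticeClosure, inv_coe_set] using Set.inv_mem_inv.2 hx

lemma sInf_isSublattice_eq_latticeClosureSubgroup (P : Subgroup A) :
    sInf {M : Subgroup A | P ≤ M ∧ IsSublattice (M : Set A)} = latticeClosureSubgroup P :=
  le_antisymm (sInf_le ⟨subset_latticeClosure, isSublattice_latticeClosure⟩)
    (le_sInf fun _ hM => latticeClosure_min hM.1 hM.2)

theorem mem_join_eq_sup_inf_general {K H : Subgroup A} (hKH : (K * H : Set A) = H * K) {z : A}
    (hz : z ∈ sInf {M : Subgroup A | K ⊔ H ≤ M ∧ IsSublattice (M : Set A)}) :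
    ∃ (I J : Finset ℕ) (hI : I.Nonempty) (hJ : J.Nonempty) (k h : ℕ → ℕ → A),
      (∀ i ∈ I, ∀ j ∈ J, k i j ∈ K ∧ h i j ∈ H) ∧
      z = I.sup' hI (fun i => J.inf' hJ (fun j => k i j * h i j)) := by
  have hz' : z ∈ supClosure (infClosure (K * H : Set A)) := by
    rw [sInf_isSublattice_eq_latticeClosureSubgroup] at hz
    rwa [supClosure_infClosure_of_group, ← coe_sup_eq_mul_of_mul_comm hKH]
  obtain ⟨m, n, p, hp, rfl⟩ := exists_sup'_inf'_range_eq_of_mem_supClosure_infClosure hz'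
  choose k hk h hh hkh using hp
  obtain rfl : (fun i j => k i j * h i j) = p := funext₂ hkh
  exact ⟨range (m + 1), range (n + 1), nonempty_range_add_one, nonempty_range_add_one, k, h,
    fun i _ j _ => ⟨hk i j, hh i j⟩, rfl⟩

end LatticeOrderedGroup

/-- In an abelian lattice-ordered group, every element of the sub-ℓ-group generated by two
sub-ℓ-groups `K` and `H` is a finite join of finite meets of products `k * h` with
`k ∈ K`, `h ∈ H`. -/
theorem mem_join_eq_sup_inf {A : Type*} [Lattice A] [CommGroup A]
    [CovariantClass A A (· * ·) (· ≤ ·)]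
    (K H : Subgroup A)
    (hKsup : ∀ a b : A, a ∈ K → b ∈ K → a ⊔ b ∈ K)
    (hHsup : ∀ a b : A, a ∈ H → b ∈ H → a ⊔ b ∈ H)
    -- `L` is the sub-ℓ-group generated by `K ∪ H`
    (L : Set A)
    (hKL : (K : Set A) ⊆ L) (hHL : (H : Set A) ⊆ L)
    (hLmul : ∀ x ∈ L, ∀ y ∈ L, x * y ∈ L)
    (hLinv : ∀ x ∈ L, x⁻¹ ∈ L)
    (hLsup : ∀ x ∈ L, ∀ y ∈ L, x ⊔ y ∈ L)
    (hLinf : ∀ x ∈ L, ∀ y ∈ L, x ⊓ y ∈ L)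
    (hLmin : ∀ M : Set A, (K : Set A) ⊆ M → (H : Set A) ⊆ M →
      (∀ x ∈ M, ∀ y ∈ M, x * y ∈ M) → (∀ x ∈ M, x⁻¹ ∈ M) →
      (∀ x ∈ M, ∀ y ∈ M, x ⊔ y ∈ M) → (∀ x ∈ M, ∀ y ∈ M, x ⊓ y ∈ M) → L ⊆ M) :
    ∀ z ∈ L, ∃ (I J : Finset ℕ) (hI : I.Nonempty) (hJ : J.Nonempty) (k h : ℕ → ℕ → A),
      (∀ i ∈ I, ∀ j ∈ J, k i j ∈ K ∧ h i j ∈ H) ∧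
      z = I.sup' hI (fun i => J.inf' hJ (fun j => k i j * h i j)) := by
  have : MulLeftMono A := ‹_›
  refine fun z hz => mem_join_eq_sup_inf_general (mul_comm _ _) (Subgroup.mem_sInf.2 ?_)
  rintro M ⟨hKHM, hM⟩
  obtain ⟨hKM, hHM⟩ := sup_le_iff.1 hKHM
  exact hLmin M hKM hHM (fun _ hx _ hy => M.mul_mem hx hy) (fun _ => M.inv_mem)
    (fun _ hx _ hy => hM.supClosed hx hy) (fun _ hx _ hy => hM.infClosed hx hy) hz
end
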